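/- arXiv:1004.5387 — 9 statements merged into one kernel-verified Lean document; each statement's English description precedes it below -/
import Mathlib

section
/- Let N be a positive odd integer and let m be an integer with m = 2N or m ≥ 2N+2. Then the family of polynomials S_{N,m} = { F_{N+m,j} : 1 ≤ j ≤ N, j odd } is linearly independent over ℂ. -/
section
open MvPolynomial

/-- The polynomial `F_{n,j}(u,v) = u^{n-j}(v-w)^j + v^{n-j}(w-u)^j + w^{n-j}(u-v)^j`
where `w = -(u+v)`. -/
noncomputable def F (n j : ℕ) : MvPolynomial (Fin 2) ℂ :=
  let u : MvPolynomial (Fin 2) ℂ := X 0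
  let v : MvPolynomial (Fin 2) ℂ := X 1
  let w : MvPolynomial (Fin 2) ℂ := -(u + v)
  u ^ (n - j) * (v - w) ^ j + v ^ (n - j) * (w - u) ^ j + w ^ (n - j) * (u - v) ^ j

end

/-!
Put `u = X`, `v = -1`, `w = 1 - X`. For odd `j`, the reflection `X ↦ 1 - X` carries the first
summand of `F n j` to minus the third, and the middle summand has degree at most `j`, so a `d`-fold
derivative with `d > j` kills it. Take `d` even and larger than every index. A linear relation with
coefficients `g j` then says that `f = ∑ j, g j * X ^ (n - j) * (X - 2) ^ j` has a
reflection-symmetric `d`-th derivative. As `f` is divisible by `X ^ (n + 1 - d)`, this derivative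
is divisible by `X ^ k * (1 - X) ^ k` with `k = n + 1 - 2 * d`, while its degree is at most `n - d`.

If `3 * d ≤ n + 1`, comparing degrees gives `f = 0`. If `n = 3 * d - 3`, the bounds differ by one;
a reflection-symmetric polynomial has even degree, so `f` is a multiple of the `d`-fold primitive of
the Beta integrand `X ^ k * (1 - X) ^ k`. That primitive has degree below `n`, whereas every odd `j`
gives a summand with value `-1` at `1` and leading coefficient `1`; hence `f(1) = -[X ^ n] f = 0`,
and the multiple is zero because the Beta integral is not. Finally `f = 0` forces `g = 0`, since
reversing coefficients turns the summands into the powers `(1 - 2 * X) ^ j`.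
-/

open Polynomial Submodule
open scoped Nat

section Reflection

variable {R : Type*} [CommRing R] {p : R[X]} {k : ℕ}

lemma X_mul_one_sub_X_pow_dvd_of_comp_one_sub_X
    (hsymm : p.comp (1 - X) = p) (hdvd : X ^ k ∣ p) : X ^ k * (1 - X) ^ k ∣ p := by
  have hdvd' : (1 - X) ^ k ∣ p := by
    obtain ⟨q, hq⟩ := hdvd
    refine ⟨q.comp (1 - X), ?_⟩
    rw [← hsymm, hq, mul_comp, X_pow_comp]
  have hcoprime : IsCoprime (X : R[X]) (1 - X) := ⟨1, 1, by ring⟩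
  exact hcoprime.pow.mul_dvd hdvd hdvd'

lemma natDegree_one_sub_X [Nontrivial R] : (1 - X : R[X]).natDegree = 1 := by
  rw [← neg_sub, natDegree_neg, ← C_1, natDegree_X_sub_C]

variable [IsDomain R]

lemma natDegree_X_mul_one_sub_X_pow (k : ℕ) :
    (X ^ k * (1 - X) ^ k : R[X]).natDegree = 2 * k := by
  have h0 : (1 - X : R[X]) ≠ 0 := ne_zero_of_natDegree_gt (n := 0) (by simp [natDegree_one_sub_X])
  rw [natDegree_mul (pow_ne_zero _ X_ne_zero) (pow_ne_zero _ h0), natDegree_X_pow, natDegree_pow,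
    natDegree_one_sub_X]
  ring

variable [NeZero (2 : R)]

lemma even_natDegree_of_comp_one_sub_X (hsymm : p.comp (1 - X) = p) :
    Even p.natDegree := by
  rcases eq_or_ne p 0 with rfl | hp
  · simp
  have hlead : (1 - X : R[X]).leadingCoeff = -1 := by
    rw [leadingCoeff, natDegree_one_sub_X]
    simp [coeff_one]
  have h := leadingCoeff_comp (p := p) (q := 1 - X) (by simp [natDegree_one_sub_X])
  rw [hsymm, hlead, eq_comm, mul_eq_left₀ (leadingCoeff_ne_zero.mpr hp)] at h
  have hneg : (-1 : R) ≠ 1 := fun h => two_ne_zero (α := R) (by linear_combination -h)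
  exact (neg_one_pow_eq_one_iff_even hneg).mp h

lemma eq_C_mul_of_comp_one_sub_X (hsymm : p.comp (1 - X) = p)
    (hdvd : X ^ k ∣ p) (hdeg : p.natDegree ≤ 2 * k + 1) :
    ∃ b, p = C b * (X ^ k * (1 - X) ^ k) := by
  obtain ⟨q, rfl⟩ := X_mul_one_sub_X_pow_dvd_of_comp_one_sub_X hsymm hdvd
  rcases eq_or_ne (X ^ k * (1 - X) ^ k * q) 0 with h0 | h0
  · exact ⟨0, by simp [h0]⟩
  have heven := even_natDegree_of_comp_one_sub_X hsymm
  rw [natDegree_mul (left_ne_zero_of_mul h0) (right_ne_zero_of_mul h0),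
    natDegree_X_mul_one_sub_X_pow] at hdeg heven
  have hq : q.natDegree = 0 := by grind
  exact ⟨q.coeff 0, by rw [← eq_C_of_natDegree_eq_zero hq, mul_comm]⟩

end Reflection

lemma eq_zero_of_X_pow_dvd_of_iterate_derivative_eq_zero {R : Type*} [CommRing R]
    [IsDomain R] [CharZero R] {f : R[X]} {d : ℕ} (hdvd : X ^ d ∣ f)
    (hder : derivative^[d] f = 0) : f = 0 := by
  ext i
  rcases lt_or_ge i d with hi | hi
  · simpa using X_pow_dvd_iff.mp hdvd i hi
  · have h := congrArg (coeff · (i - d)) hder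
    simp only [coeff_iterate_derivative, Nat.sub_add_cancel hi, coeff_zero, smul_eq_zero,
      Nat.descFactorial_eq_zero_iff_lt] at h
    simpa using h.resolve_left hi.not_gt

section Beta

variable {K : Type*} [Field K]

/-- The `d`-fold primitive, vanishing to order at least `d` at `0`, of the Beta integrand
`X ^ a * (1 - X) ^ b`. The recursion on `b` expands one factor `1 - X`. -/
noncomputable def betaPrimitive (K : Type*) [Field K] (d : ℕ) : ℕ → ℕ → K[X]
  | a, 0 => C ((a ! : K) / (a + d)!) * X ^ (a + d)
  | a, b + 1 => betaPrimitive K d a b - betaPrimitive K d (a + 1) b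

lemma X_pow_dvd_betaPrimitive (d a b : ℕ) : X ^ (a + d) ∣ betaPrimitive K d a b := by
  induction b generalizing a with
  | zero => exact dvd_mul_left _ _
  | succ b ih => exact dvd_sub (ih a) ((pow_dvd_pow X (by lia)).trans (ih (a + 1)))

lemma natDegree_betaPrimitive_le (d a b : ℕ) :
    (betaPrimitive K d a b).natDegree ≤ a + b + d := by
  induction b generalizing a with
  | zero => exact natDegree_C_mul_X_pow_le _ _
  | succ b ih =>
    exact natDegree_sub_le_of_le (ih a) (ih (a + 1)) |>.trans (by lia)

variable [CharZero K]

lemma iterate_derivative_betaPrimitive (d a b : ℕ) :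
    derivative^[d] (betaPrimitive K d a b) = X ^ a * (1 - X) ^ b := by
  induction b generalizing a with
  | zero =>
    have hfact : ((a ! : K) / (a + d)!) * (a + d).descFactorial d = 1 := by
      have h := Nat.factorial_mul_descFactorial (n := a + d) (k := d) (by lia)
      rw [Nat.add_sub_cancel] at h
      rw [div_mul_eq_mul_div, ← Nat.cast_mul, h, div_self (mod_cast (a + d).factorial_ne_zero)]
    rw [betaPrimitive, iterate_derivative_C_mul, iterate_derivative_X_pow_eq_C_mul, ← mul_assoc,
      ← C_mul, hfact, Nat.add_sub_cancel, C_1, one_mul, pow_zero, mul_one]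
  | succ b ih =>
    rw [betaPrimitive, iterate_derivative_sub, ih, ih]
    ring

-- For `0 < d`, `(d - 1)!` times this is the Beta value `B(a + 1, b + d)`.
lemma eval_one_betaPrimitive (d a b : ℕ) :
    (betaPrimitive K d a b).eval 1 = d.ascFactorial b * a ! / (a + d + b)! := by
  induction b generalizing a with
  | zero => simp [betaPrimitive]
  | succ b ih =>
    have h0 : ((a + d + b)! : K) ≠ 0 := mod_cast (a + d + b).factorial_ne_zero
    have h1 : (a + d + b + 1 : K) ≠ 0 := mod_cast (a + d + b).succ_ne_zero
    rw [betaPrimitive, eval_sub, ih, ih, Nat.ascFactorial_succ,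
      show a + 1 + d + b = a + d + b + 1 by ring, ← add_assoc, Nat.factorial_succ (a + d + b),
      Nat.factorial_succ a]
    push_cast
    field_simp
    ring

lemma eval_one_betaPrimitive_ne_zero {d : ℕ} (hd : d ≠ 0) (a b : ℕ) :
    (betaPrimitive K d a b).eval 1 ≠ 0 := by
  obtain ⟨d, rfl⟩ := Nat.exists_eq_succ_of_ne_zero hd
  rw [eval_one_betaPrimitive]
  have hasc : ((d + 1).ascFactorial b : K) ≠ 0 := mod_cast (Nat.ascFactorial_pos d b).ne'
  have hfact (m : ℕ) : (m ! : K) ≠ 0 := mod_cast m.factorial_ne_zero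
  exact div_ne_zero (mul_ne_zero hasc (hfact _)) (hfact _)

end Beta

section SymmetricDerivative

variable {K : Type*} [Field K] [CharZero K] {f : K[X]} {k d n : ℕ}

lemma eq_zero_of_iterate_derivative_comp_one_sub_X
    (hsymm : (derivative^[d] f).comp (1 - X) = derivative^[d] f) (hdvd : X ^ (k + d) ∣ f)
    (hdeg : f.natDegree < 2 * k + d) : f = 0 := by
  refine eq_zero_of_X_pow_dvd_of_iterate_derivative_eq_zero (d := d)
    ((pow_dvd_pow X (by lia)).trans hdvd) ?_
  by_contra hne
  have hdvd' : X ^ k ∣ derivative^[d] f := by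
    simpa using pow_sub_dvd_iterate_derivative_of_pow_dvd d hdvd
  have hlow : 2 * k ≤ (derivative^[d] f).natDegree := by
    rw [← natDegree_X_mul_one_sub_X_pow (R := K) k]
    exact natDegree_le_of_dvd (X_mul_one_sub_X_pow_dvd_of_comp_one_sub_X hsymm hdvd') hne
  have hup := natDegree_iterate_derivative f d
  have hd : d ≤ f.natDegree := not_lt.mp fun h => hne (iterate_derivative_eq_zero h)
  lia

lemma eq_C_mul_betaPrimitive_of_iterate_derivative_comp_one_sub_X
    (hsymm : (derivative^[d] f).comp (1 - X) = derivative^[d] f) (hdvd : X ^ (k + d) ∣ f)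
    (hdeg : f.natDegree ≤ 2 * k + d + 1) : ∃ b, f = C b * betaPrimitive K d k k := by
  have hdvd' : X ^ k ∣ derivative^[d] f := by
    simpa using pow_sub_dvd_iterate_derivative_of_pow_dvd d hdvd
  have hdeg' : (derivative^[d] f).natDegree ≤ 2 * k + 1 :=
    (natDegree_iterate_derivative f d).trans (by lia)
  obtain ⟨b, hb⟩ := eq_C_mul_of_comp_one_sub_X hsymm hdvd' hdeg'
  refine ⟨b, sub_eq_zero.mp ?_⟩
  refine eq_zero_of_X_pow_dvd_of_iterate_derivative_eq_zero (d := d) ?_ ?_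
  · exact (pow_dvd_pow X (by lia)).trans
      (dvd_sub hdvd ((X_pow_dvd_betaPrimitive d k k).mul_left (C b)))
  · rw [iterate_derivative_sub, iterate_derivative_C_mul, iterate_derivative_betaPrimitive, hb,
      sub_self]

lemma eq_zero_of_iterate_derivative_comp_one_sub_X_of_eval_one (hd : d ≠ 0)
    (hsymm : (derivative^[d] f).comp (1 - X) = derivative^[d] f) (hdvd : X ^ (k + d) ∣ f)
    (hdeg : f.natDegree ≤ 2 * k + d + 1) (heval : f.eval 1 = -f.coeff (2 * k + d + 1)) :
    f = 0 := by
  obtain ⟨b, rfl⟩ := eq_C_mul_betaPrimitive_of_iterate_derivative_comp_one_sub_X hsymm hdvd hdeg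
  have hcoeff : (betaPrimitive K d k k).coeff (2 * k + d + 1) = 0 :=
    coeff_eq_zero_of_natDegree_lt ((natDegree_betaPrimitive_le d k k).trans_lt (by lia))
  rw [coeff_C_mul, hcoeff, mul_zero, neg_zero, eval_mul, eval_C, mul_eq_zero] at heval
  rw [heval.resolve_right (eval_one_betaPrimitive_ne_zero hd k k), C_0, zero_mul]

end SymmetricDerivative

section LeadForm

/-- The first summand `u ^ (n - j) * (v - w) ^ j` of the cyclic form, specialised to `u = X`,
`v = -1` and hence `w = 1 - X`. -/
noncomputable def leadForm (R : Type*) [CommRing R] (n j : ℕ) : R[X] := X ^ (n - j) * (X - C 2) ^ j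

variable {R : Type*} [CommRing R] {n d : ℕ} {f : R[X]}

lemma X_pow_dvd_of_mem_span_leadForm (hf : f ∈ span R (leadForm R n '' Set.Iio d)) :
    X ^ (n + 1 - d) ∣ f := by
  induction hf using span_induction with
  | mem _ h =>
    obtain ⟨j, hj, rfl⟩ := h
    rw [Set.mem_Iio] at hj
    exact (pow_dvd_pow X (by lia)).mul_right _
  | zero => exact dvd_zero _
  | add _ _ _ _ hx hy => exact dvd_add hx hy
  | smul a _ _ hx => exact dvd_smul_of_dvd a hx

lemma monic_leadForm (n j : ℕ) : (leadForm R n j).Monic :=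
  (monic_X_pow _).mul ((monic_X_sub_C 2).pow j)

lemma reflect_X_sub_C_pow (a : R) (j : ℕ) : reflect j ((X - C a) ^ j) = (1 - C a * X) ^ j := by
  induction j with
  | zero => simp
  | succ j ih =>
    have hle : ((X - C a) ^ j).natDegree ≤ j := by
      simpa using natDegree_pow_le_of_le j (natDegree_X_sub_C_le a)
    rw [pow_succ, reflect_mul _ _ hle (natDegree_X_sub_C_le a), ih, reflect_sub, reflect_one_X,
      reflect_C, pow_one, pow_succ]

lemma reflect_leadForm {j : ℕ} (hj : j ≤ n) :
    reflect n (leadForm R n j) = (1 - C 2 * X) ^ j := by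
  obtain ⟨i, rfl⟩ := Nat.exists_eq_add_of_le' hj
  have hle : ((X - C 2 : R[X]) ^ j).natDegree ≤ j := by
    simpa using natDegree_pow_le_of_le j (natDegree_X_sub_C_le (2 : R))
  rw [leadForm, Nat.add_sub_cancel, reflect_mul _ _ (natDegree_X_pow_le i) hle,
    reflect_X_sub_C_pow, reflect_monomial, revAt_le le_rfl, Nat.sub_self, pow_zero, one_mul]

lemma linearIndepOn_leadForm [IsDomain R] [NeZero (2 : R)] (n : ℕ) :
    LinearIndepOn R (leadForm R n) (Set.Iic n) := by
  let powers : Sequence R :=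
    { elems' j := (1 - C 2 * X) ^ j
      degree_eq' j := by
        have hdeg : (1 - C 2 * X : R[X]).degree = 1 := by
          rw [sub_eq_neg_add, ← neg_mul, ← C_neg, ← C_1,
            degree_linear (neg_ne_zero.mpr two_ne_zero)]
        rw [degree_pow, hdeg, nsmul_one] }
  let reflectₗ : R[X] →ₗ[R] R[X] :=
    { toFun := reflect n
      map_add' p q := reflect_add p q n
      map_smul' a p := by simp only [smul_eq_C_mul, reflect_C_mul, RingHom.id_apply] }
  refine LinearIndepOn.of_comp reflectₗ ?_
  exact (powers.linearIndependent.linearIndepOn _).congr fun j hj => (reflect_leadForm hj).symm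

variable [Nontrivial R]

lemma natDegree_leadForm {j : ℕ} (hj : j ≤ n) : (leadForm R n j).natDegree = n := by
  rw [leadForm, (monic_X_pow _).natDegree_mul ((monic_X_sub_C 2).pow j), natDegree_X_pow,
    (monic_X_sub_C 2).natDegree_pow, natDegree_X_sub_C, mul_one, Nat.sub_add_cancel hj]

lemma natDegree_le_of_mem_span_leadForm (hf : f ∈ span R (leadForm R n '' Set.Iic n)) :
    f.natDegree ≤ n := by
  have hle : span R (leadForm R n '' Set.Iic n) ≤ degreeLE R n := by
    rw [span_le]
    rintro _ ⟨j, hj, rfl⟩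
    exact mem_degreeLE.mpr (natDegree_le_iff_degree_le.mp (natDegree_leadForm hj).le)
  exact natDegree_le_iff_degree_le.mpr (mem_degreeLE.mp (hle hf))

lemma eval_one_of_mem_span_leadForm
    (hf : f ∈ span R (leadForm R n '' {j | j ≤ n ∧ Odd j})) : f.eval 1 = -f.coeff n := by
  refine LinearMap.eqOn_span (f := leval 1) (g := -lcoeff R n) ?_ hf
  rintro _ ⟨j, ⟨hj, hodd⟩, rfl⟩
  have hcoeff : (leadForm R n j).coeff n = 1 := by
    simpa [natDegree_leadForm (R := R) hj] using
      (monic_leadForm (R := R) n j).coeff_natDegree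
  have heval : (leadForm R n j).eval 1 = -1 := by
    simp [leadForm, show (1 - 2 : R) = -1 by norm_num, hodd.neg_one_pow]
  simp [hcoeff, heval]

end LeadForm

section CyclicForm

/-- The polynomial expression defining `F n j`, evaluated at two elements of a commutative ring. -/
def cyclicForm {A : Type*} [CommRing A] (n j : ℕ) (u v : A) : A :=
  let w := -(u + v)
  u ^ (n - j) * (v - w) ^ j + v ^ (n - j) * (w - u) ^ j + w ^ (n - j) * (u - v) ^ j

lemma map_cyclicForm {A B E : Type*} [CommRing A] [CommRing B] [FunLike E A B]
    [RingHomClass E A B] (f : E) (n j : ℕ) (u v : A) :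
    f (cyclicForm n j u v) = cyclicForm n j (f u) (f v) := by
  simp [cyclicForm]

lemma cyclicForm_X_neg_one {R : Type*} [CommRing R] (n : ℕ) {j : ℕ} (hj : Odd j) :
    cyclicForm n j X (-1 : R[X]) =
      leadForm R n j - (leadForm R n j).comp (1 - X) + (-1) ^ (n - j) * (1 - 2 * X) ^ j := by
  have hw : -(X + -1 : R[X]) = 1 - X := by ring
  have hu : -1 - (1 - X : R[X]) = X - C 2 := by rw [map_ofNat C 2]; ring
  have hv : 1 - X - X = (1 - 2 * X : R[X]) := by ring
  have hw' : X - -1 = -(1 - X - C 2 : R[X]) := by rw [map_ofNat C 2]; ring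
  simp only [cyclicForm, leadForm, hw, hu, hv, hw', hj.neg_pow, mul_comp, pow_comp, sub_comp,
    X_comp, C_comp]
  ring

lemma iterate_derivative_cyclicForm_X_neg_one {R : Type*} [CommRing R] (n : ℕ) {d j : ℕ}
    (hd : Even d) (hjd : j < d) (hj : Odd j) :
    derivative^[d] (cyclicForm n j X (-1 : R[X])) =
      derivative^[d] (leadForm R n j) - (derivative^[d] (leadForm R n j)).comp (1 - X) := by
  have hlow : derivative^[d] ((-1) ^ (n - j) * (1 - 2 * X) ^ j : R[X]) = 0 := by
    refine iterate_derivative_eq_zero (lt_of_le_of_lt ?_ hjd)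
    compute_degree
  rw [cyclicForm_X_neg_one n hj, iterate_map_add, iterate_derivative_sub, hlow, add_zero,
    iterate_derivative_comp_one_sub_X, hd.neg_one_pow, one_mul]

variable {K : Type*} [Field K] [CharZero K]

lemma eq_zero_of_mem_span_leadForm {n d : ℕ} (hd : Even d)
    (hn : n + 3 = 3 * d ∨ 3 * d ≤ n + 1) {f : K[X]}
    (hf : f ∈ span K (leadForm K n '' {j | j < d ∧ Odd j}))
    (hsymm : (derivative^[d] f).comp (1 - X) = derivative^[d] f) : f = 0 := by
  obtain ⟨e, rfl⟩ := hd
  have hdvd : X ^ (n + 1 - 2 * (e + e) + (e + e)) ∣ f :=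
    (pow_dvd_pow X (by lia)).trans
      (X_pow_dvd_of_mem_span_leadForm (span_mono (Set.image_mono fun j hj => hj.1) hf))
  have hindices : {j | j < e + e ∧ Odd j} ⊆ {j | j ≤ n ∧ Odd j} :=
    fun j ⟨hj, hodd⟩ => ⟨by lia, hodd⟩
  have hf' := span_mono (Set.image_mono hindices) hf
  have hdeg : f.natDegree ≤ n :=
    natDegree_le_of_mem_span_leadForm (span_mono (Set.image_mono fun j hj => hj.1) hf')
  rcases hn with hn | hn
  · have hindex : 2 * (n + 1 - 2 * (e + e)) + (e + e) + 1 = n := by lia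
    refine eq_zero_of_iterate_derivative_comp_one_sub_X_of_eval_one (by lia) hsymm hdvd
      (hdeg.trans hindex.ge) ?_
    rw [hindex, eval_one_of_mem_span_leadForm hf']
  · exact eq_zero_of_iterate_derivative_comp_one_sub_X hsymm hdvd (by lia)

theorem linearIndepOn_cyclicForm_X_neg_one {n d : ℕ} (hd : Even d)
    (hn : n + 3 = 3 * d ∨ 3 * d ≤ n + 1) :
    LinearIndepOn K (fun j => cyclicForm n j X (-1 : K[X])) {j | j < d ∧ Odd j} := by
  let D : K[X] →ₗ[K] K[X] := derivative ^ d
  let asymm : K[X] →ₗ[K] K[X] := D - (aeval (1 - X)).toLinearMap ∘ₗ D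
  have hasymm (f : K[X]) : asymm f = derivative^[d] f - (derivative^[d] f).comp (1 - X) := by
    simp only [asymm, D, LinearMap.sub_apply, LinearMap.comp_apply, Module.End.pow_apply,
      AlgHom.toLinearMap_apply, comp_eq_aeval]
  have hinj : Set.InjOn asymm (span K (leadForm K n '' {j | j < d ∧ Odd j})) := by
    refine LinearMap.injOn_of_disjoint_ker subset_rfl ?_
    refine disjoint_def.mpr fun f hf hker => eq_zero_of_mem_span_leadForm hd hn hf ?_
    rw [LinearMap.mem_ker, hasymm, sub_eq_zero] at hker
    exact hker.symm
  have hlead : LinearIndepOn K (leadForm K n) {j | j < d ∧ Odd j} :=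
    (linearIndepOn_leadForm n).mono fun j ⟨hj, _⟩ => Set.mem_Iic.mpr (by lia)
  refine LinearIndepOn.of_comp D ((hlead.map_injOn asymm hinj).congr fun j hj => ?_)
  simp only [Function.comp_apply, D, Module.End.pow_apply, hasymm]
  exact (iterate_derivative_cyclicForm_X_neg_one n hd hj.1 hj.2).symm

theorem stmt_0_general (N m : ℕ) (hm : m = 2 * N ∨ m ≥ 2 * N + 2) :
    LinearIndepOn K (fun j => cyclicForm (N + m) j (MvPolynomial.X 0 : MvPolynomial (Fin 2) K)
      (MvPolynomial.X 1)) {j | 1 ≤ j ∧ j ≤ N ∧ Odd j} := by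
  obtain ⟨d, hd, hn, hlt⟩ : ∃ d, Even d ∧ (N + m + 3 = 3 * d ∨ 3 * d ≤ N + m + 1) ∧
      ∀ j ≤ N, Odd j → j < d := by
    rcases N.even_or_odd with hN | hN
    · exact ⟨N, hN, by lia, fun j hj hodd => hj.lt_of_ne (by grind)⟩
    · exact ⟨N + 1, hN.add_one, by lia, fun j hj _ => by lia⟩
  let dehomogenise : MvPolynomial (Fin 2) K →ₐ[K] K[X] := MvPolynomial.aeval ![X, -1]
  have hmap : dehomogenise.toLinearMap ∘
      (fun j => cyclicForm (N + m) j (MvPolynomial.X 0) (MvPolynomial.X 1)) =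
      fun j => cyclicForm (N + m) j X (-1) := by
    ext1 j
    simp [dehomogenise, map_cyclicForm]
  refine LinearIndepOn.of_comp dehomogenise.toLinearMap ?_
  rw [hmap]
  exact (linearIndepOn_cyclicForm_X_neg_one hd hn).mono
    fun j ⟨_, hjN, hodd⟩ => ⟨hlt j hjN hodd, hodd⟩

end CyclicForm

/-- Proposition 1.1: for `N` a positive odd integer and `m = 2N` or `m ≥ 2N+2`, the family
`S_{N,m} = {F_{N+m,j} : 1 ≤ j ≤ N, j odd}` is linearly independent over `ℂ`. -/
theorem stmt_0 (N m : ℕ) (hNodd : Odd N) (hNpos : 1 ≤ N)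
    (hm : m = 2 * N ∨ m ≥ 2 * N + 2) :
    LinearIndependent ℂ
      (fun j : {j : ℕ // 1 ≤ j ∧ j ≤ N ∧ Odd j} => F (N + m) j.1) :=
  stmt_0_general N m hm
end

section
/- For all integers n and j with 1 ≤ j ≤ n−2, the polynomial identity (∂²/∂u² + ∂²/∂v² − ∂²/∂u∂v) F_{n,j} = (n−j)(n−j−1) F_{n−2,j} + 3j(j−1) F_{n−2,j−2} holds in ℂ[u,v], where the last term is interpreted as 0 when j = 1 (its coefficient 3j(j−1) vanishes). -/
open MvPolynomial

/-! The operator `∂²/∂u² + ∂²/∂v² − ∂²/∂u∂v` has symbol `Q(s, t) = s² − st + t²`. Each summand of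
`F_{n,j}` is `p ^ (n - j) * q ^ j` with `p`, `q` linear forms whose coefficient vectors are
orthogonal for `Q`, with `Q = 1` on that of `p` and `Q = 3` on that of `q`. The mixed term of the
Leibniz rule is therefore zero, and the two pure terms produce the coefficients `1` and `3`.
-/

theorem derivation_apply_apply_pow_mul_pow {R A : Type*} [CommSemiring R] [CommSemiring A]
    [Algebra R A] (D E : Derivation R A A) {p q : A} (hp : D (E p) = 0) (hq : D (E q) = 0)
    (m k : ℕ) :
    D (E (p ^ m * q ^ k)) =
      (m * (m - 1) : ℕ) * (D p * E p) * (p ^ (m - 2) * q ^ k)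
        + (k * (k - 1) : ℕ) * (D q * E q) * (p ^ m * q ^ (k - 2))
        + m * k * (D p * E q + D q * E p) * (p ^ (m - 1) * q ^ (k - 1)) := by
  simp only [Derivation.leibniz, Derivation.leibniz_pow, map_add, map_nsmul, smul_eq_mul, hp, hq,
    mul_zero, zero_add, Nat.sub_sub, Nat.reduceAdd]
  simp only [nsmul_eq_mul, Nat.cast_mul]
  ring

section SecondOrder

open Matrix

variable {σ R : Type*} [Fintype σ] [CommSemiring R]

/-- The second order differential operator `∑ i, ∑ j, B i j ∂ᵢ ∂ⱼ` with constant coefficients `B`,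
which need not be symmetric. -/
noncomputable def secondOrderOp (B : Matrix σ σ R) : MvPolynomial σ R →ₗ[R] MvPolynomial σ R :=
  ∑ i, ∑ j, B i j • (pderiv i).toLinearMap ∘ₗ (pderiv j).toLinearMap

theorem secondOrderOp_apply (B : Matrix σ σ R) (f : MvPolynomial σ R) :
    secondOrderOp B f = ∑ i, ∑ j, C (B i j) * pderiv i (pderiv j f) := by
  simp [secondOrderOp, LinearMap.sum_apply, C_mul']

theorem C_dotProduct_mulVec (B : Matrix σ σ R) (a c : σ → R) :
    (C (a ⬝ᵥ B *ᵥ c) : MvPolynomial σ R) = ∑ i, ∑ j, C (B i j) * (C (a i) * C (c j)) := by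
  simp only [dotProduct, mulVec, Finset.mul_sum, map_sum, map_mul]
  exact Finset.sum_congr rfl fun i _ => Finset.sum_congr rfl fun j _ => mul_left_comm _ _ _

theorem secondOrderOp_pow_mul_pow (B : Matrix σ σ R) {p q : MvPolynomial σ R} {a c : σ → R}
    (hp : ∀ i, pderiv i p = C (a i)) (hq : ∀ i, pderiv i q = C (c i)) (m k : ℕ) :
    secondOrderOp B (p ^ m * q ^ k) =
      C ((m * (m - 1) : ℕ) * (a ⬝ᵥ B *ᵥ a)) * (p ^ (m - 2) * q ^ k)
        + C ((k * (k - 1) : ℕ) * (c ⬝ᵥ B *ᵥ c)) * (p ^ m * q ^ (k - 2))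
        + C (m * k * (a ⬝ᵥ B *ᵥ c + c ⬝ᵥ B *ᵥ a)) * (p ^ (m - 1) * q ^ (k - 1)) := by
  have second_deriv (i j : σ) := derivation_apply_apply_pow_mul_pow (pderiv i) (pderiv j)
    (p := p) (q := q) (by rw [hp, pderiv_C]) (by rw [hq, pderiv_C]) m k
  simp only [secondOrderOp_apply, second_deriv, hp, hq, map_mul, map_add, map_natCast,
    C_dotProduct_mulVec, Finset.mul_sum, Finset.sum_mul, mul_add, add_mul,
    ← Finset.sum_add_distrib]
  exact Finset.sum_congr rfl fun i _ => Finset.sum_congr rfl fun j _ => by ring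

theorem secondOrderOp_pow_mul_pow_of_orthogonal (B : Matrix σ σ R) {p q : MvPolynomial σ R}
    {a c : σ → R} (hp : ∀ i, pderiv i p = C (a i)) (hq : ∀ i, pderiv i q = C (c i))
    (hac : a ⬝ᵥ B *ᵥ c + c ⬝ᵥ B *ᵥ a = 0) (m k : ℕ) :
    secondOrderOp B (p ^ m * q ^ k) =
      C ((m * (m - 1) : ℕ) * (a ⬝ᵥ B *ᵥ a)) * (p ^ (m - 2) * q ^ k)
        + C ((k * (k - 1) : ℕ) * (c ⬝ᵥ B *ᵥ c)) * (p ^ m * q ^ (k - 2)) := by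
  rw [secondOrderOp_pow_mul_pow B hp hq, hac, mul_zero, map_zero, zero_mul, add_zero]

end SecondOrder

section Cyclic

open Matrix

variable {R : Type*} [CommRing R]

/-- The operator `∂₀² + ∂₁² - ∂₀∂₁`, whose symbol `s² - st + t²` is the norm form of the Eisenstein
integers. The cross term is carried by the `(0, 1)` entry of the matrix alone, which avoids
division by `2`. -/
noncomputable def eisensteinLaplacian : MvPolynomial (Fin 2) R →ₗ[R] MvPolynomial (Fin 2) R :=
  secondOrderOp !![1, -1; 0, 1]

theorem eisensteinLaplacian_apply (f : MvPolynomial (Fin 2) R) :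
    eisensteinLaplacian f =
      pderiv 0 (pderiv 0 f) + pderiv 1 (pderiv 1 f) - pderiv 0 (pderiv 1 f) := by
  simp only [eisensteinLaplacian, secondOrderOp_apply, Fin.sum_univ_two, of_apply, cons_val',
    cons_val_zero, cons_val_one, cons_val_fin_one, map_one, map_neg, map_zero]
  ring

theorem eisensteinLaplacian_pow_mul_pow_of_orthogonal {p q : MvPolynomial (Fin 2) R}
    {a b c d α γ : R} (hp : ∀ i, pderiv i p = C (![a, b] i))
    (hq : ∀ i, pderiv i q = C (![c, d] i)) (norm_p : a ^ 2 - a * b + b ^ 2 = α)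
    (norm_q : c ^ 2 - c * d + d ^ 2 = γ) (orthogonal : 2 * (a * c + b * d) = a * d + b * c)
    (m k : ℕ) :
    eisensteinLaplacian (p ^ m * q ^ k) =
      C ((m * (m - 1) : ℕ) * α) * (p ^ (m - 2) * q ^ k)
        + C ((k * (k - 1) : ℕ) * γ) * (p ^ m * q ^ (k - 2)) := by
  have bilin (x y z t : R) :
      ![x, y] ⬝ᵥ !![1, -1; 0, 1] *ᵥ ![z, t] = x * z + y * t - x * t := by
    simp only [mulVec, vec2_dotProduct, of_apply, cons_val_zero, cons_val_one, cons_val_fin_one]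
    ring
  have bilin_pp : ![a, b] ⬝ᵥ !![1, -1; 0, 1] *ᵥ ![a, b] = α := by
    linear_combination bilin a b a b + norm_p
  have bilin_qq : ![c, d] ⬝ᵥ !![1, -1; 0, 1] *ᵥ ![c, d] = γ := by
    linear_combination bilin c d c d + norm_q
  have polar_pq : ![a, b] ⬝ᵥ !![1, -1; 0, 1] *ᵥ ![c, d]
      + ![c, d] ⬝ᵥ !![1, -1; 0, 1] *ᵥ ![a, b] = 0 := by
    linear_combination bilin a b c d + bilin c d a b + orthogonal
  rw [eisensteinLaplacian, secondOrderOp_pow_mul_pow_of_orthogonal _ hp hq polar_pq, bilin_pp,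
    bilin_qq]

variable (R) in
/-- The polynomial `u ^ m (v - w) ^ k + v ^ m (w - u) ^ k + w ^ m (u - v) ^ k` with
`w = -(u + v)`, over any commutative ring. It is `F_{m+k,k}`: indexing by the two exponents
avoids the truncated subtraction `n - j`. -/
noncomputable def cyclicSum (m k : ℕ) : MvPolynomial (Fin 2) R :=
  let u : MvPolynomial (Fin 2) R := X 0
  let v : MvPolynomial (Fin 2) R := X 1
  let w : MvPolynomial (Fin 2) R := -(u + v)
  u ^ m * (v - w) ^ k + v ^ m * (w - u) ^ k + w ^ m * (u - v) ^ k

theorem stmt_1_general (m k : ℕ) :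
    pderiv 0 (pderiv 0 (cyclicSum R m k)) + pderiv 1 (pderiv 1 (cyclicSum R m k))
        - pderiv 0 (pderiv 1 (cyclicSum R m k))
      = C ((m * (m - 1) : ℕ) : R) * cyclicSum R (m - 2) k
        + C ((3 * k * (k - 1) : ℕ) : R) * cyclicSum R m (k - 2) := by
  have C_two : (C 2 : MvPolynomial (Fin 2) R) = 2 := map_ofNat C 2
  have u_term := eisensteinLaplacian_pow_mul_pow_of_orthogonal (R := R)
    (p := X 0) (q := X 1 - -(X 0 + X 1)) (a := 1) (b := 0) (c := 1) (d := 2) (α := 1) (γ := 3)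
    (by simp [Fin.forall_fin_two, pderiv_X])
    (by simp [Fin.forall_fin_two, pderiv_X, C_two, one_add_one_eq_two])
    (by ring) (by ring) (by ring) m k
  have v_term := eisensteinLaplacian_pow_mul_pow_of_orthogonal (R := R)
    (p := X 1) (q := -(X 0 + X 1) - X 0) (a := 0) (b := 1) (c := -2) (d := -1) (α := 1) (γ := 3)
    (by simp [Fin.forall_fin_two, pderiv_X])
    (by simp [Fin.forall_fin_two, pderiv_X, C_two, neg_sub_left, one_add_one_eq_two])
    (by ring) (by ring) (by ring) m k
  have w_term := eisensteinLaplacian_pow_mul_pow_of_orthogonal (R := R)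
    (p := -(X 0 + X 1)) (q := X 0 - X 1) (a := -1) (b := -1) (c := 1) (d := -1) (α := 1) (γ := 3)
    (by simp [Fin.forall_fin_two, pderiv_X])
    (by simp [Fin.forall_fin_two, pderiv_X])
    (by ring) (by ring) (by ring) m k
  rw [← eisensteinLaplacian_apply]
  simp only [cyclicSum, map_add, u_term, v_term, w_term, map_mul, map_natCast, map_one, map_ofNat,
    Nat.cast_mul, Nat.cast_ofNat]
  ring

end Cyclic

theorem F_eq_cyclicSum (n j : ℕ) : F n j = cyclicSum ℂ (n - j) j := rfl

theorem C_mul_F_sub_two_sub_two (n j : ℕ) :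
    C ((3 * j * (j - 1) : ℕ) : ℂ) * F (n - 2) (j - 2)
      = C ((3 * j * (j - 1) : ℕ) : ℂ) * cyclicSum ℂ (n - j) (j - 2) := by
  rcases lt_or_ge j 2 with hj | hj
  · have coeff_eq_zero : 3 * j * (j - 1) = 0 := by interval_cases j <;> rfl
    simp only [coeff_eq_zero, Nat.cast_zero, map_zero, zero_mul]
  · rw [F_eq_cyclicSum, show n - 2 - (j - 2) = n - j by lia]

/-- Lemma 1.2(a): `(∂²/∂u² + ∂²/∂v² − ∂²/∂u∂v) F_{n,j}
  = (n−j)(n−j−1) F_{n−2,j} + 3j(j−1) F_{n−2,j−2}` for `1 ≤ j ≤ n−2`. -/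
theorem stmt_1 (n j : ℕ) (hj : 1 ≤ j) (hjn : j ≤ n - 2) :
    pderiv (0 : Fin 2) (pderiv (0 : Fin 2) (F n j))
      + pderiv (1 : Fin 2) (pderiv (1 : Fin 2) (F n j))
      - pderiv (0 : Fin 2) (pderiv (1 : Fin 2) (F n j))
    = C (((n - j) * (n - j - 1) : ℕ) : ℂ) * F (n - 2) j
      + C ((3 * j * (j - 1) : ℕ) : ℂ) * F (n - 2) (j - 2) := by
  rw [C_mul_F_sub_two_sub_two, F_eq_cyclicSum (n - 2) j, Nat.sub_right_comm n 2 j]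
  exact stmt_1_general (n - j) j
end

section
/- For all integers n and j with 0 ≤ j ≤ n, the identity 4(u² + uv + v²) · F_{n,j} = 3 F_{n+2,j} + F_{n+2,j+2} holds in ℂ[u,v]. -/
open MvPolynomial

/-! When `u + v + w = 0`, the form `q = u² + uv + v²` is invariant under cyclic shifts of
`(u, v, w)` and satisfies `4q = 3u² + (v - w)²`. Multiplying `u ^ k * (v - w) ^ j` by `4q` thus
gives `3 * u ^ (k + 2) * (v - w) ^ j + u ^ k * (v - w) ^ (j + 2)`, and likewise for the other
two cyclic summands. -/

lemma mul_pow_mul_pow_of_eq_mul_sq_add_sq {R : Type*} [CommSemiring R] {a d x y : R}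
    (h : d = a * x ^ 2 + y ^ 2) (k j : ℕ) :
    d * (x ^ k * y ^ j) = a * (x ^ (k + 2) * y ^ j) + x ^ k * y ^ (j + 2) := by
  rw [h]
  ring

section CommRing

variable {R : Type*} [CommRing R] {u v w : R}

lemma sq_add_mul_add_sq_rotate (h : u + v + w = 0) :
    u ^ 2 + u * v + v ^ 2 = v ^ 2 + v * w + w ^ 2 := by
  linear_combination (u - w) * h

lemma four_mul_sq_add_mul_add_sq (h : u + v + w = 0) :
    4 * (u ^ 2 + u * v + v ^ 2) = 3 * u ^ 2 + (v - w) ^ 2 := by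
  obtain rfl : w = -(u + v) := (neg_eq_of_add_eq_zero_right h).symm
  ring

/-- The cyclic sum of `u ^ k * (v - w) ^ j` over `(u, v, w)`. For `w = -(u + v)` and `k = n - j` it
is the paper's `F_{n,j}`; indexing by `k` instead of `n` avoids truncated subtraction. -/
def cyclicPowSum (u v w : R) (k j : ℕ) : R :=
  u ^ k * (v - w) ^ j + v ^ k * (w - u) ^ j + w ^ k * (u - v) ^ j

theorem stmt_2_general (h : u + v + w = 0) (k j : ℕ) :
    4 * (u ^ 2 + u * v + v ^ 2) * cyclicPowSum u v w k j
      = 3 * cyclicPowSum u v w (k + 2) j + cyclicPowSum u v w k (j + 2) := by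
  have h_vwu : v + w + u = 0 := by linear_combination h
  have h_wuv : w + u + v = 0 := by linear_combination h
  have hu : 4 * (u ^ 2 + u * v + v ^ 2) = 3 * u ^ 2 + (v - w) ^ 2 :=
    four_mul_sq_add_mul_add_sq h
  have hv : 4 * (u ^ 2 + u * v + v ^ 2) = 3 * v ^ 2 + (w - u) ^ 2 := by
    rw [sq_add_mul_add_sq_rotate h, four_mul_sq_add_mul_add_sq h_vwu]
  have hw : 4 * (u ^ 2 + u * v + v ^ 2) = 3 * w ^ 2 + (u - v) ^ 2 := by
    rw [← sq_add_mul_add_sq_rotate h_wuv, four_mul_sq_add_mul_add_sq h_wuv]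
  simp only [cyclicPowSum, mul_add (4 * (u ^ 2 + u * v + v ^ 2)),
    mul_pow_mul_pow_of_eq_mul_sq_add_sq hu, mul_pow_mul_pow_of_eq_mul_sq_add_sq hv,
    mul_pow_mul_pow_of_eq_mul_sq_add_sq hw]
  ring

end CommRing

lemma F_eq_cyclicPowSum (n j : ℕ) :
    F n j = cyclicPowSum (X 0) (X 1) (-(X 0 + X 1)) (n - j) j :=
  rfl

/-- Lemma 1.2(b): `4(u² + uv + v²) F_{n,j} = 3 F_{n+2,j} + F_{n+2,j+2}` for `0 ≤ j ≤ n`. -/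
theorem stmt_2 (n j : ℕ) (hjn : j ≤ n) :
    4 * ((X 0 : MvPolynomial (Fin 2) ℂ) ^ 2 + X 0 * X 1 + X 1 ^ 2) * F n j
      = 3 * F (n + 2) j + F (n + 2) (j + 2) := by
  simpa only [F_eq_cyclicPowSum, Nat.sub_add_comm hjn, Nat.add_sub_add_right] using
    stmt_2_general (add_neg_cancel (X 0 + X 1 : MvPolynomial (Fin 2) ℂ)) (n - j) j
end

section
/- If n is a positive integer divisible by 3, then the polynomial u² + uv + v² does not divide the polynomial F_{n,1} in ℂ[u,v]. (In particular F_{n,1} ≠ 0 for such n.) -/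
open MvPolynomial

/-!
Let `ω` be a primitive cube root of unity. The form `u² + uv + v²` vanishes at `(u, v) = (1, ω)`,
where `w = ω²`. There the factors `w - u` and `u - v` of `F_{n,j}` are `ω` and `ω²` times `v - w`,
so `F_{n,j}(1, ω) = (ω - ω²)^j (1 + ω^n + ω^{2n})`. When `3 ∣ n` this is `3 (ω - ω²)^j ≠ 0`.
-/

section PrimitiveRoot

variable {R : Type*} [CommRing R] [IsDomain R] {ω : R}

theorem one_add_add_sq_eq_zero_of_isPrimitiveRoot_three (hω : IsPrimitiveRoot ω 3) :
    1 + ω + ω ^ 2 = 0 := by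
  simpa [Finset.sum_range_succ] using hω.geom_sum_eq_zero (by norm_num)

theorem sub_sq_ne_zero_of_isPrimitiveRoot {k : ℕ} (hω : IsPrimitiveRoot ω k) (hk : 1 < k) :
    ω - ω ^ 2 ≠ 0 := by
  have hfactor : ω - ω ^ 2 = ω * (1 - ω) := by ring
  rw [hfactor]
  exact mul_ne_zero (hω.ne_zero (by lia)) (sub_ne_zero.mpr (hω.ne_one hk).symm)

end PrimitiveRoot

theorem eval_F_of_one_add_add_sq_eq_zero {ω : ℂ} (hω : 1 + ω + ω ^ 2 = 0) {n j : ℕ} (hj : j ≤ n) :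
    eval ![1, ω] (F n j) = (ω - ω ^ 2) ^ j * (1 + ω ^ n + (ω ^ 2) ^ n) := by
  have hw : -(1 + ω) = ω ^ 2 := by linear_combination -hω
  have hwu : ω ^ 2 - 1 = ω * (ω - ω ^ 2) := by linear_combination (ω - 1) * hω
  have huv : 1 - ω = ω ^ 2 * (ω - ω ^ 2) := by
    linear_combination (1 - 2 * ω + ω ^ 2) * hω
  calc eval ![1, ω] (F n j)
      = (ω - ω ^ 2) ^ j + ω ^ (n - j) * (ω ^ 2 - 1) ^ j + (ω ^ 2) ^ (n - j) * (1 - ω) ^ j := by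
        simp [F, ← hw]
    _ = (ω - ω ^ 2) ^ j * (1 + ω ^ (n - j) * ω ^ j + (ω ^ 2) ^ (n - j) * (ω ^ 2) ^ j) := by
        rw [hwu, huv, mul_pow, mul_pow]; ring
    _ = (ω - ω ^ 2) ^ j * (1 + ω ^ n + (ω ^ 2) ^ n) := by
        rw [pow_sub_mul_pow _ hj, pow_sub_mul_pow _ hj]

theorem eval_F_of_isPrimitiveRoot_three_of_dvd {ω : ℂ} (hω : IsPrimitiveRoot ω 3) {n j : ℕ}
    (hj : j ≤ n) (h3 : 3 ∣ n) : eval ![1, ω] (F n j) = 3 * (ω - ω ^ 2) ^ j := by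
  have hωn : ω ^ n = 1 := (hω.pow_eq_one_iff_dvd n).mpr h3
  rw [eval_F_of_one_add_add_sq_eq_zero (one_add_add_sq_eq_zero_of_isPrimitiveRoot_three hω) hj,
    pow_right_comm, hωn]
  ring

theorem stmt_3_general {n j : ℕ} (hj : j ≤ n) (h3 : 3 ∣ n) :
    ¬ ((X 0 : MvPolynomial (Fin 2) ℂ) ^ 2 + X 0 * X 1 + X 1 ^ 2 ∣ F n j)
      ∧ F n j ≠ 0 := by
  obtain ⟨ω, hω⟩ : ∃ ω : ℂ, IsPrimitiveRoot ω 3 := ⟨_, Complex.isPrimitiveRoot_exp 3 three_ne_zero⟩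
  have hform : eval ![1, ω] (X 0 ^ 2 + X 0 * X 1 + X 1 ^ 2) = 0 := by
    simpa using one_add_add_sq_eq_zero_of_isPrimitiveRoot_three hω
  have hF : eval ![1, ω] (F n j) ≠ 0 := by
    rw [eval_F_of_isPrimitiveRoot_three_of_dvd hω hj h3]
    exact mul_ne_zero three_ne_zero
      (pow_ne_zero j (sub_sq_ne_zero_of_isPrimitiveRoot hω (by norm_num)))
  have hndvd : ¬ ((X 0 : MvPolynomial (Fin 2) ℂ) ^ 2 + X 0 * X 1 + X 1 ^ 2 ∣ F n j) :=
    fun hdvd => hF (zero_dvd_iff.mp (hform ▸ map_dvd (eval ![1, ω]) hdvd))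
  exact ⟨hndvd, fun hzero => hndvd (hzero ▸ dvd_zero _)⟩

/-- Lemma 1.2(c): if `n` is a positive integer divisible by 3, then `u² + uv + v²` does not
divide `F_{n,1}`; in particular `F_{n,1} ≠ 0`. -/
theorem stmt_3 (n : ℕ) (hn : 0 < n) (h3 : 3 ∣ n) :
    ¬ ((X 0 : MvPolynomial (Fin 2) ℂ) ^ 2 + X 0 * X 1 + X 1 ^ 2 ∣ F n 1)
      ∧ F n 1 ≠ 0 :=
  stmt_3_general hn h3
end

section
/- Let N be a positive odd integer and m ≥ 0 an integer. If the family S_{N,m} is linearly independent over ℂ, then the family S_{N,m+2} is linearly independent over ℂ. -/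
open MvPolynomial

/-!
Let `ω` be a primitive cube root of unity. The derivations `∂` and `∂'` of `ℂ[u,v]` sending
`(u, v, w)` to `(1, ω, ω²)` and `(1, ω², ω)` compose to a Laplacian `Δ = ∂ ∘ ∂'`. For each of the
three products in `F_{n,j}` the two linear forms are orthogonal for the quadratic form of `Δ`, with
norms `1` and `3`. Hence
`Δ F_{n+2,j} = (n+2-j)(n+1-j) F_{n,j} + 3j(j-1) F_{n,j-2}`,
a triangular system with nonzero diagonal as long as `j ≤ n`, and a linear map that sends a family
to a linearly independent one can only start from a linearly independent family.
-/

section Triangular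

open Submodule Set

variable {R M ι : Type*} [Ring R] [AddCommGroup M] [Module R M] [LinearOrder ι]

theorem linearIndependent_of_smul_mem_span_Iio {v : ι → M}
    (hv : ∀ i (c : R), c • v i ∈ span R (v '' Iio i) → c = 0) : LinearIndependent R v := by
  refine linearIndependent_iff.2 fun l hl => by_contra fun hne => ?_
  have hsupp : l.support.Nonempty := Finsupp.support_nonempty_iff.2 hne
  set i := l.support.max' hsupp
  have hmem : i ∈ l.support := l.support.max'_mem hsupp
  have hsum : l i • v i = -∑ j ∈ l.support.erase i, l j • v j :=
    eq_neg_of_add_eq_zero_left ((Finset.add_sum_erase _ (fun j => l j • v j) hmem).trans hl)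
  refine Finsupp.mem_support_iff.1 hmem (hv i (l i) ?_)
  rw [hsum]
  refine neg_mem (sum_mem fun j hj => smul_mem _ _ (subset_span (mem_image_of_mem v ?_)))
  exact l.support.lt_max'_of_mem_erase_max' hsupp hj

theorem linearIndependent_of_sub_smul_mem_span_Iio {f g : ι → M} {d : ι → R}
    (hg : LinearIndependent R g) (hd : ∀ i, IsRightRegular (d i))
    (hfg : ∀ i, f i - d i • g i ∈ span R (g '' Iio i)) : LinearIndependent R f := by
  refine linearIndependent_of_smul_mem_span_Iio fun i c hc => ?_
  have hspan : span R (f '' Iio i) ≤ span R (g '' Iio i) := by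
    rw [span_le]
    rintro _ ⟨j, hj : j < i, rfl⟩
    rw [SetLike.mem_coe, ← sub_add_cancel (f j) (d j • g j)]
    exact add_mem (span_mono (image_mono (Iio_subset_Iio hj.le)) (hfg j))
      (smul_mem _ _ (subset_span (mem_image_of_mem g hj)))
  have hdiag : (c * d i) • g i ∈ span R (g '' Iio i) := by
    have := sub_mem (hspan hc) (smul_mem _ c (hfg i))
    rwa [smul_sub, sub_sub_cancel, smul_smul] at this
  have hzero : c * d i = 0 := hg.eq_zero_of_smul_mem_span i _ <|
    span_mono (image_mono fun j hj => mem_sdiff_singleton.2 ⟨mem_univ j, ne_of_lt hj⟩) hdiag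
  exact hd i (hzero.trans (zero_mul _).symm)

end Triangular

theorem derivation_comp_pow_mul_pow {R A : Type*} [CommSemiring R] [CommSemiring A] [Algebra R A]
    (D E : Derivation R A A) {a b : A} {α α' β β' : R}
    (hDa : D a = algebraMap R A α) (hEa : E a = algebraMap R A α')
    (hDb : D b = algebraMap R A β) (hEb : E b = algebraMap R A β') (p q : ℕ) :
    D (E (a ^ p * b ^ q)) = (p * (p - 1)) • (α * α') • (a ^ (p - 2) * b ^ q)
      + (p * q) • (α * β' + β * α') • (a ^ (p - 1) * b ^ (q - 1))
      + (q * (q - 1)) • (β * β') • (a ^ p * b ^ (q - 2)) := by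
  simp only [Derivation.leibniz, Derivation.leibniz_pow, Derivation.map_algebraMap,
    Derivation.map_natCast, hDa, hEa, hDb, hEb, map_add, map_mul, smul_eq_mul, nsmul_eq_mul,
    Nat.sub_sub, Algebra.smul_def (R := R)]
  push_cast
  ring

section Rotation

variable {R : Type*} [CommRing R]

/-- The derivation of `R[u,v]` with `u ↦ 1` and `v ↦ ζ`. If `1 + ζ + ζ ^ 2 = 0`, it sends
`w = -(u + v)` to `ζ ^ 2`. -/
noncomputable def rotationDerivation (ζ : R) :
    Derivation R (MvPolynomial (Fin 2) R) (MvPolynomial (Fin 2) R) :=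
  mkDerivation R ![1, C ζ]

/-- The second-order operator that is, for `1 + ζ + ζ ^ 2 = 0`, the Laplacian
`∂²/∂u² - ∂²/∂u∂v + ∂²/∂v²`, in factored form. -/
noncomputable def rotationLaplacian (ζ : R) :
    MvPolynomial (Fin 2) R →ₗ[R] MvPolynomial (Fin 2) R :=
  (rotationDerivation ζ).toLinearMap ∘ₗ (rotationDerivation (ζ ^ 2)).toLinearMap

theorem rotationDerivation_X_zero (ζ : R) : rotationDerivation ζ (X 0) = C 1 :=
  mkDerivation_X ..

theorem rotationDerivation_X_one (ζ : R) : rotationDerivation ζ (X 1) = C ζ :=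
  mkDerivation_X ..

theorem rotationDerivation_neg_X_add_X {ζ : R} (hζ : 1 + ζ + ζ ^ 2 = 0) :
    rotationDerivation ζ (-(X 0 + X 1)) = C (ζ ^ 2) := by
  rw [map_neg, map_add, rotationDerivation_X_zero, rotationDerivation_X_one, ← C_add, ← C_neg]
  exact congrArg C (by linear_combination -hζ)

theorem rotationLaplacian_pow_mul_pow {ζ α α' β β' : R} {a b : MvPolynomial (Fin 2) R}
    (ha : rotationDerivation ζ a = C α) (ha' : rotationDerivation (ζ ^ 2) a = C α')
    (hb : rotationDerivation ζ b = C β) (hb' : rotationDerivation (ζ ^ 2) b = C β')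
    (hα : α * α' = 1) (hβ : β * β' = 3) (horth : α * β' + β * α' = 0) (p q : ℕ) :
    rotationLaplacian ζ (a ^ p * b ^ q) =
      (p * (p - 1)) • (a ^ (p - 2) * b ^ q) + (3 * (q * (q - 1))) • (a ^ p * b ^ (q - 2)) := by
  refine (derivation_comp_pow_mul_pow _ _ ha ha' hb hb' p q).trans ?_
  rw [hα, hβ, horth, one_smul, zero_smul, smul_zero, add_zero, mul_comm 3, mul_smul _ 3,
    ofNat_smul_eq_nsmul]

end Rotation

theorem rotationLaplacian_F {ζ : ℂ} (hζ : 1 + ζ + ζ ^ 2 = 0) {n j : ℕ} (hj : j ≤ n) :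
    rotationLaplacian ζ (F (n + 2) j) =
      ((n + 2 - j) * (n + 1 - j)) • F n j + (3 * (j * (j - 1))) • F n (j - 2) := by
  have hζ' : 1 + ζ ^ 2 + (ζ ^ 2) ^ 2 = 0 := by linear_combination (1 - ζ + ζ ^ 2) * hζ
  have hDu := rotationDerivation_X_zero ζ
  have hDv := rotationDerivation_X_one ζ
  have hDw := rotationDerivation_neg_X_add_X hζ
  have hEu := rotationDerivation_X_zero (ζ ^ 2)
  have hEv := rotationDerivation_X_one (ζ ^ 2)
  have hEw := rotationDerivation_neg_X_add_X hζ'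
  have sub {ξ β γ : ℂ} {x y : MvPolynomial (Fin 2) ℂ} (hx : rotationDerivation ξ x = C β)
      (hy : rotationDerivation ξ y = C γ) : rotationDerivation ξ (x - y) = C (β - γ) := by
    rw [map_sub, hx, hy, C_sub]
  have hu := rotationLaplacian_pow_mul_pow hDu hEu (sub hDv hDw) (sub hEv hEw)
    (by grind) (by grind) (by grind) (n + 2 - j) j
  have hv := rotationLaplacian_pow_mul_pow hDv hEv (sub hDw hDu) (sub hEw hEu)
    (by grind) (by grind) (by grind) (n + 2 - j) j
  have hw := rotationLaplacian_pow_mul_pow hDw hEw (sub hDu hDv) (sub hEu hEv)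
    (by grind) (by grind) (by grind) (n + 2 - j) j
  rw [show n + 2 - j - 1 = n + 1 - j by omega, show n + 2 - j - 2 = n - j by omega] at hu hv hw
  simp only [F, map_add, hu, hv, hw]
  obtain hj2 | hj2 := lt_or_ge j 2
  · have hcoeff : j * (j - 1) = 0 := mul_eq_zero.2 (by omega)
    simp only [hcoeff, mul_zero, zero_smul, add_zero, smul_add]
  · rw [show n - (j - 2) = n + 2 - j by omega]
    simp only [smul_add]
    abel

theorem exists_one_add_add_sq_eq_zero : ∃ ζ : ℂ, 1 + ζ + ζ ^ 2 = 0 := by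
  have hζ := Complex.isPrimitiveRoot_exp 3 three_ne_zero
  exact ⟨_, by simpa [Finset.sum_range_succ] using hζ.geom_sum_eq_zero (by norm_num)⟩

theorem stmt_4_general {n : ℕ} {J : Set ℕ} (hJ : ∀ j, j + 2 ∈ J → j ∈ J) (hJn : ∀ j ∈ J, j ≤ n)
    (h : LinearIndepOn ℂ (F n) J) : LinearIndepOn ℂ (F (n + 2)) J := by
  obtain ⟨ζ, hζ⟩ := exists_one_add_add_sq_eq_zero
  refine LinearIndepOn.of_comp (rotationLaplacian ζ) ?_
  refine linearIndependent_of_sub_smul_mem_span_Iio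
    (d := fun j : J => (((n + 2 - j) * (n + 1 - j) : ℕ) : ℂ)) h (fun j => ?_) (fun j => ?_)
  · have hjn := hJn j j.2
    refine (IsRegular.of_ne_zero (Nat.cast_ne_zero.2 (mul_ne_zero ?_ ?_))).right <;> omega
  · simp only [Function.comp_apply, rotationLaplacian_F hζ (hJn j j.2), Nat.cast_smul_eq_nsmul,
      add_sub_cancel_left]
    obtain ⟨_ | _ | k, hk⟩ := j
    · simp
    · simp
    · exact Submodule.smul_of_tower_mem _ _ (Submodule.subset_span ⟨⟨k, hJ k hk⟩, by simp, rfl⟩)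

/-- Corollary 1.3(a): if the family `S_{N,m}` is linearly independent over `ℂ`,
then so is `S_{N,m+2}`. -/
theorem stmt_4 (N m : ℕ) (hNodd : Odd N) (hNpos : 1 ≤ N)
    (h : LinearIndependent ℂ
      (fun j : {j : ℕ // 1 ≤ j ∧ j ≤ N ∧ Odd j} => F (N + m) j.1)) :
    LinearIndependent ℂ
      (fun j : {j : ℕ // 1 ≤ j ∧ j ≤ N ∧ Odd j} => F (N + (m + 2)) j.1) := by
  refine stmt_4_general (J := {j | 1 ≤ j ∧ j ≤ N ∧ Odd j}) ?_ ?_ h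
  · rintro j ⟨-, hjN, hodd⟩
    rw [Nat.odd_add, iff_true_right even_two] at hodd
    exact ⟨hodd.pos, by omega, hodd⟩
  · exact fun j hj => hj.2.1.trans (Nat.le_add_right N m)
end

section
/- For all integers n and j with 1 ≤ j ≤ n and j odd, the polynomial (u−v)(u+2v)(2u+v) divides F_{n,j} in ℂ[u,v]. -/
open MvPolynomial

/-!
For fixed weights, `a * x ^ k + b * y ^ k + c * z ^ k` satisfies in `k` the linear recurrence whose
characteristic polynomial is `(T - x) * (T - y) * (T - z)`. Put `Δ = (v - w) * (w - u) * (u - v)`.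
With weights `v - w`, `w - u`, `u - v` and bases `u`, `v`, `w`, the recurrence gives divisibility
by `Δ` from the initial values `0`, `0`, `-Δ`. With weights `u ^ m`, `v ^ m`, `w ^ m` and bases
`v - w`, `w - u`, `u - v`, the bases have sum `0` and product `Δ`, so modulo `Δ` the recurrence
links exponents of the same parity, and every odd exponent reduces to the exponent `1` of the
previous case.
-/

section WeightedPowerSum

variable {R : Type*} [CommRing R]

theorem weighted_pow_sum_add_three (a b c x y z : R) (k : ℕ) :
    a * x ^ (k + 3) + b * y ^ (k + 3) + c * z ^ (k + 3) =
      (x + y + z) * (a * x ^ (k + 2) + b * y ^ (k + 2) + c * z ^ (k + 2))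
        - (x * y + y * z + z * x) * (a * x ^ (k + 1) + b * y ^ (k + 1) + c * z ^ (k + 1))
        + x * y * z * (a * x ^ k + b * y ^ k + c * z ^ k) := by
  ring

theorem dvd_weighted_pow_sum {d a b c x y z : R} (h₀ : d ∣ a + b + c)
    (h₁ : d ∣ a * x + b * y + c * z) (h₂ : d ∣ a * x ^ 2 + b * y ^ 2 + c * z ^ 2) :
    ∀ k : ℕ, d ∣ a * x ^ k + b * y ^ k + c * z ^ k
  | 0 => by simpa only [pow_zero, mul_one] using h₀
  | 1 => by simpa only [pow_one] using h₁
  | 2 => h₂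
  | k + 3 => by
    rw [weighted_pow_sum_add_three]
    exact dvd_add
      (dvd_sub ((dvd_weighted_pow_sum h₀ h₁ h₂ (k + 2)).mul_left _)
        ((dvd_weighted_pow_sum h₀ h₁ h₂ (k + 1)).mul_left _))
      ((dvd_weighted_pow_sum h₀ h₁ h₂ k).mul_left _)

theorem mul_mul_dvd_weighted_pow_sum_of_odd {a b c x y z : R} (hsum : x + y + z = 0)
    (hone : x * y * z ∣ a * x + b * y + c * z) {j : ℕ} (hj : Odd j) :
    x * y * z ∣ a * x ^ j + b * y ^ j + c * z ^ j := by
  obtain ⟨k, rfl⟩ := hj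
  induction k with
  | zero => simpa only [mul_zero, zero_add, pow_one] using hone
  | succ k ih =>
    rw [show 2 * (k + 1) + 1 = 2 * k + 3 by ring, weighted_pow_sum_add_three, hsum, zero_mul,
      zero_sub]
    exact dvd_add (ih.mul_left _).neg_right (dvd_mul_right _ _)

end WeightedPowerSum

theorem sub_mul_sub_mul_sub_dvd_cyclic_sum_pow_mul_sub {R : Type*} [CommRing R] (u v w : R)
    (m : ℕ) :
    (v - w) * (w - u) * (u - v) ∣ u ^ m * (v - w) + v ^ m * (w - u) + w ^ m * (u - v) := by
  simpa only [mul_comm (_ ^ m)] using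
    dvd_weighted_pow_sum (d := (v - w) * (w - u) * (u - v)) (a := v - w) (b := w - u) (c := u - v)
      (x := u) (y := v) (z := w) ⟨0, by ring⟩ ⟨0, by ring⟩ ⟨-1, by ring⟩ m

theorem stmt_7_general {R : Type*} [CommRing R] (u v w : R) (m : ℕ) {j : ℕ} (hj : Odd j) :
    (v - w) * (w - u) * (u - v) ∣
      u ^ m * (v - w) ^ j + v ^ m * (w - u) ^ j + w ^ m * (u - v) ^ j :=
  have hsum : (v - w) + (w - u) + (u - v) = 0 := by ring
  mul_mul_dvd_weighted_pow_sum_of_odd hsum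
    (sub_mul_sub_mul_sub_dvd_cyclic_sum_pow_mul_sub u v w m) hj

/-- For `1 ≤ j ≤ n` with `j` odd, the polynomial `(u−v)(u+2v)(2u+v)` divides `F_{n,j}`. -/
theorem stmt_7 (n j : ℕ) (hj : 1 ≤ j) (hjn : j ≤ n) (hodd : Odd j) :
    ((X 0 - X 1) * (X 0 + 2 * X 1) * (2 * X 0 + X 1) : MvPolynomial (Fin 2) ℂ) ∣ F n j :=
  Dvd.dvd.trans ⟨-1, by ring⟩ (stmt_7_general (X 0) (X 1) (-(X 0 + X 1)) (n - j) hodd)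
end

section
/- Let φ be a polynomial with complex coefficients in one variable t satisfying the following three properties: (i) for every nonzero a ∈ ℂ, φ(a) = 0 implies φ(a^{−1}) = 0; (ii) φ(−2)·φ(3) = 0; (iii) for every nonzero a ∈ ℂ, φ(a) = 0 implies φ(a^{−2})·φ(a + a^{−1}) = 0. Then φ = 0. -/
/-!
The multiplicative height `H (n / d) = max |n| |d|` of a nonzero rational number (in lowest terms)
strictly increases under `r ↦ r + r⁻¹`, because `(n ^ 2 + d ^ 2) / (n * d)` is again in lowest
terms, and, once `1 < H r`, also under `r ↦ r⁻¹ ^ 2`, because `H (r⁻¹ ^ 2) = H r ^ 2`. Hence a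
finite set of rational numbers that contains `r⁻¹ ^ 2` or `r + r⁻¹` for each of its nonzero
elements `r` has no element of height greater than `1`: one of maximal height would be
contradictory. The rational roots of a nonzero polynomial form a finite set.
-/

open Height Polynomial

theorem mulHeight₁_intCast_div_intCast {p q : ℤ} (h : IsCoprime p q) :
    mulHeight₁ (p / q : ℚ) = max |p| |q| := by
  have hgcd : Finset.univ.gcd ![p, q] = 1 := by
    simpa [Finset.univ_fin2, ← Int.coe_gcd, ← Int.abs_eq_normalize, Int.gcd, Int.natAbs_abs] using
      Int.isCoprime_iff_gcd_eq_one.mp h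
  have hcast : ![(p : ℚ), q] = ((↑) : ℤ → ℚ) ∘ ![p, q] := by
    ext i; fin_cases i <;> rfl
  have hsup : ⨆ i, |![p, q] i| = max |p| |q| := by
    rw [← Finset.sup'_univ_eq_ciSup]
    simp [Finset.univ_fin2]
  rw [mulHeight₁_div_eq_mulHeight, hcast, Rat.mulHeight_eq_max_abs_of_gcd_eq_one hgcd, hsup]

theorem mulHeight₁_add_inv {r : ℚ} (hr : r ≠ 0) :
    mulHeight₁ (r + r⁻¹) = r.num ^ 2 + r.den ^ 2 := by
  have hsum : r + r⁻¹ = ((r.num ^ 2 + r.den ^ 2 : ℤ) : ℚ) / ((r.num * r.den : ℤ) : ℚ) := by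
    have hnum : (r.num : ℚ) ≠ 0 := by exact_mod_cast Rat.num_ne_zero.mpr hr
    have hden : (r.den : ℚ) ≠ 0 := by exact_mod_cast r.den_ne_zero
    nth_rw 1 2 [← Rat.num_div_den r]
    push_cast
    field_simp
  have hle : |r.num * r.den| ≤ |r.num ^ 2 + (r.den : ℤ) ^ 2| := by
    rw [abs_of_nonneg (by positivity : 0 ≤ r.num ^ 2 + (r.den : ℤ) ^ 2), abs_le]
    constructor <;> nlinarith [sq_nonneg (r.num + r.den), sq_nonneg (r.num - r.den)]
  rw [hsum, mulHeight₁_intCast_div_intCast (Int.isCoprime_of_sq_sum' (Rat.isCoprime_num_den r)),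
    max_eq_left hle, abs_of_nonneg (by positivity)]
  norm_cast

theorem mulHeight₁_lt_mulHeight₁_add_inv {r : ℚ} (hr : r ≠ 0) :
    mulHeight₁ r < mulHeight₁ (r + r⁻¹) := by
  have hnum : 0 < r.num.natAbs := Int.natAbs_pos.mpr (Rat.num_ne_zero.mpr hr)
  have hmax : max r.num.natAbs r.den < r.num.natAbs ^ 2 + r.den ^ 2 :=
    max_lt (by nlinarith [r.den_pos]) (by nlinarith [r.den_pos])
  have hsq : (r.num : ℝ) ^ 2 = (r.num.natAbs : ℝ) ^ 2 := by
    simp only [Nat.cast_natAbs, Int.cast_abs, sq_abs]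
  rw [mulHeight₁_add_inv hr, Rat.mulHeight₁_eq_max, hsq]
  exact_mod_cast hmax

theorem mulHeight₁_lt_mulHeight₁_inv_sq {K : Type*} [Field K] [AdmissibleAbsValues K] {x : K}
    (hx : 1 < mulHeight₁ x) : mulHeight₁ x < mulHeight₁ (x⁻¹ ^ 2) := by
  rw [mulHeight₁_pow, mulHeight₁_inv]
  exact lt_self_pow₀ hx one_lt_two

theorem one_lt_mulHeight₁_iff {r : ℚ} : 1 < mulHeight₁ r ↔ r ≠ 0 ∧ r ≠ 1 ∧ r ≠ -1 := by
  have hle : mulHeight₁ r ≤ 1 ↔ |r.num| ≤ 1 ∧ r.den = 1 := by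
    rw [Rat.mulHeight₁_eq_max, Nat.cast_le_one, max_le_iff, Int.abs_eq_natAbs]
    have := r.den_pos
    omega
  rw [← not_le, hle, Int.abs_le_one_iff]
  constructor
  · intro h
    refine ⟨?_, ?_, ?_⟩ <;> rintro rfl <;> simp at h
  · rintro ⟨h₀, h₁, h₂⟩ ⟨hnum, hden⟩
    rw [← Rat.coe_int_num_of_den_eq_one hden] at h₀ h₁ h₂
    rcases hnum with h | h | h <;> simp [h] at h₀ h₁ h₂

theorem infinite_of_inv_sq_mem_or_add_inv_mem {S : Set ℚ}
    (hS : ∀ r ∈ S, r ≠ 0 → r⁻¹ ^ 2 ∈ S ∨ r + r⁻¹ ∈ S) {r : ℚ} (hrS : r ∈ S)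
    (hr : 1 < mulHeight₁ r) : S.Infinite := by
  intro hfin
  obtain ⟨m, ⟨hmS, hm⟩, hmax⟩ :=
    (hfin.inter_of_left {s | 1 < mulHeight₁ s}).exists_maximalFor mulHeight₁ _ ⟨r, hrS, hr⟩
  have hm₀ : m ≠ 0 := (one_lt_mulHeight₁_iff.mp hm).1
  have not_lt {s : ℚ} (hs : s ∈ S) : ¬ mulHeight₁ m < mulHeight₁ s := fun hlt ↦
    (hmax ⟨hs, hm.trans hlt⟩ hlt.le).not_gt hlt
  rcases hS m hmS hm₀ with h | h
  · exact not_lt h (mulHeight₁_lt_mulHeight₁_inv_sq hm)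
  · exact not_lt h (mulHeight₁_lt_mulHeight₁_add_inv hm₀)

theorem stmt_10_general {K : Type*} [Field K] [CharZero K] (φ : K[X])
    (h : ∀ a : K, a ≠ 0 → φ.eval a = 0 → φ.eval (a⁻¹ ^ 2) * φ.eval (a + a⁻¹) = 0)
    {r : ℚ} (hr_zero : r ≠ 0) (hr_one : r ≠ 1) (hr_neg_one : r ≠ -1)
    (hr : φ.eval (r : K) = 0) : φ = 0 := by
  have hroots : {s : ℚ | φ.eval (s : K) = 0}.Infinite := by
    refine infinite_of_inv_sq_mem_or_add_inv_mem (fun s hs hs₀ ↦ ?_) hr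
      (one_lt_mulHeight₁_iff.mpr ⟨hr_zero, hr_one, hr_neg_one⟩)
    simpa using h s (Rat.cast_ne_zero.mpr hs₀) hs
  refine φ.eq_zero_of_infinite_isRoot ((hroots.image Rat.cast_injective.injOn).mono ?_)
  rintro _ ⟨s, hs, rfl⟩
  exact hs

/-- Lemma 2.4: a polynomial `φ ∈ ℂ[t]` such that (i) `φ(a) = 0` implies `φ(a⁻¹) = 0` for
nonzero `a`, (ii) `φ(−2)·φ(3) = 0`, and (iii) `φ(a) = 0` implies
`φ(a⁻²)·φ(a + a⁻¹) = 0` for nonzero `a`, is the zero polynomial. -/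
theorem stmt_10 (φ : Polynomial ℂ)
    (h1 : ∀ a : ℂ, a ≠ 0 → φ.eval a = 0 → φ.eval a⁻¹ = 0)
    (h2 : φ.eval (-2) * φ.eval 3 = 0)
    (h3 : ∀ a : ℂ, a ≠ 0 → φ.eval a = 0 → φ.eval (a⁻¹ ^ 2) * φ.eval (a + a⁻¹) = 0) :
    φ = 0 := by
  rcases mul_eq_zero.mp h2 with h | h
  · exact stmt_10_general φ h3 (r := -2) (by norm_num) (by norm_num) (by norm_num) (by simpa)
  · exact stmt_10_general φ h3 (r := 3) (by norm_num) (by norm_num) (by norm_num) (by simpa)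
end

section
/- Let Δ be an integer with Δ ≥ 3 and let F ∈ ℂ[x,y] be a homogeneous polynomial of degree Δ−1 satisfying: (1) F(y,x) = (−1)^Δ F(x,y) (as polynomials); (2) F(0,x) = 0 for all x (i.e. F vanishes on the line x = 0); (3) F(−x,x) = 0 for all x; and (4) the identity F(x,−y)·F(x+y,−z) + F(y,−z)·F(y+z,−x) + F(z,−x)·F(x+z,−y) = 0 holds for all x, y, z. Then F = 0. -/
open MvPolynomial

/-!
Put `n = Δ - 1` and `G(x, y) = F(x, -y)`. Homogeneity and (1) make `G` antisymmetric, and (4)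
becomes `G(x, y) G(x + y, z) = G(x, z) G(x + z, y) + G(x, y + z) G(y, z)`.
Suppose `x ^ m` divides `G`, and let `a y ^ k` with `k = n - m` be the coefficient of `x ^ m` in
`G(x, y)`. Comparing the coefficients of `x ^ m` in (4) gives
`a G(y, z) (y ^ k + z ^ k - (y + z) ^ k) = 0`, so in characteristic zero either `G = 0` or
`a = 0` unless `k = 1`. Hence a nonzero `G` is divisible by `x ^ (n - 1)`, that is,
`G(x, y) = x ^ (n - 1) (a y + b x)`, which antisymmetry rules out for `n ≥ 2`.
-/

section Evaluation

theorem eval_smul_of_isHomogeneous {σ R : Type*} [CommSemiring R] {F : MvPolynomial σ R} {n : ℕ}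
    (hF : F.IsHomogeneous n) (c : R) (v : σ → R) : eval (c • v) F = c ^ n * eval v F := by
  simp only [eval_eq, Finset.mul_sum]
  refine Finset.sum_congr rfl fun d hd ↦ ?_
  simp only [Pi.smul_apply, smul_eq_mul, mul_pow, Finset.prod_mul_distrib,
    Finset.prod_pow_eq_pow_sum, ← hF.degree_eq_sum_deg_support hd]
  ring

theorem eval_rename_swap {R : Type*} [CommSemiring R] (F : MvPolynomial (Fin 2) R) (x y : R) :
    eval ![x, y] (rename (Equiv.swap (0 : Fin 2) 1) F) = eval ![y, x] F := by
  rw [eval_rename]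
  congr 2
  ext i
  fin_cases i <;> simp

theorem eval_aeval_X_neg_X {R : Type*} [CommRing R] (F : MvPolynomial (Fin 2) R) (x y : R) :
    eval ![x, y] (aeval ![X 0, -X 1] F : MvPolynomial (Fin 2) R) = eval ![x, -y] F := by
  rw [aeval_def, eval₂_eq', map_sum, eval_eq']
  simp [Fin.prod_univ_two]

theorem eq_zero_of_forall_eval_pair_eq_zero {R : Type*} [CommRing R] [IsDomain R] [Infinite R]
    {G : MvPolynomial (Fin 2) R} (h : ∀ x y : R, eval ![x, y] G = 0) : G = 0 :=
  MvPolynomial.funext fun v ↦ by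
    rw [← show ![v 0, v 1] = v from FinVec.etaExpand_eq v, h, map_zero]

end Evaluation

section Slice

variable {R : Type*} [CommSemiring R] {G : MvPolynomial (Fin 2) R} {n m : ℕ}

/-- The restriction `G(X, y)` of a bivariate polynomial `G` to a horizontal line, as a univariate
polynomial. The slice at `y = 1` is the dehomogenization of `G`, and its coefficients serve as the
coefficients of the binary form `G`. -/
noncomputable def slice (G : MvPolynomial (Fin 2) R) (y : R) : Polynomial R :=
  aeval ![Polynomial.X, Polynomial.C y] G

theorem eval_slice (G : MvPolynomial (Fin 2) R) (x y : R) :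
    (slice G y).eval x = eval ![x, y] G := by
  simp [slice, aeval_def, eval₂_eq', eval_eq', Polynomial.eval_finsetSum, Fin.prod_univ_two]

theorem slice_eq_sum (hG : G.IsHomogeneous n) (y : R) :
    slice G y = ∑ i ∈ Finset.range (n + 1),
      Polynomial.monomial i ((slice G 1).coeff i * y ^ (n - i)) := by
  have h : (slice G 1).homogenize n = G :=
    Polynomial.homogenize_eq_of_isHomogeneous hG (by simp [slice])
  conv_lhs => rw [← h]
  rw [slice, Polynomial.homogenize, Finset.Nat.sum_antidiagonal_eq_sum_range_succ_mk, map_sum]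
  refine Finset.sum_congr rfl fun i _ ↦ ?_
  simp only [aeval_monomial, Finsupp.prod_fintype, pow_zero, implies_true, Fin.prod_univ_two,
    ← Polynomial.C_mul_X_pow_eq_monomial]
  simp [mul_comm, mul_left_comm]

theorem coeff_slice (hG : G.IsHomogeneous n) (hm : m ≤ n) (y : R) :
    (slice G y).coeff m = (slice G 1).coeff m * y ^ (n - m) := by
  rw [slice_eq_sum hG, Polynomial.finsetSum_coeff]
  simp [Polynomial.coeff_monomial, Nat.lt_succ_iff.mpr hm]

theorem X_pow_dvd_slice (hG : G.IsHomogeneous n) (hm : m ≤ n)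
    (hdvd : Polynomial.X ^ m ∣ slice G 1) (y : R) : Polynomial.X ^ m ∣ slice G y := by
  rw [Polynomial.X_pow_dvd_iff] at hdvd ⊢
  intro i hi
  rw [coeff_slice hG (by lia), hdvd i hi, zero_mul]

theorem eval_eq_of_X_pow_dvd_slice (hG : G.IsHomogeneous (m + 1))
    (hdvd : Polynomial.X ^ m ∣ slice G 1) (x y : R) :
    eval ![x, y] G = x ^ m * ((slice G 1).coeff m * y + (slice G 1).coeff (m + 1) * x) := by
  have hlow : ∑ i ∈ Finset.range m,
      Polynomial.monomial i ((slice G 1).coeff i * y ^ (m + 1 - i)) = 0 :=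
    Finset.sum_eq_zero fun i hi ↦ by
      rw [Polynomial.X_pow_dvd_iff.mp hdvd i (Finset.mem_range.mp hi), zero_mul, map_zero]
  rw [← eval_slice, slice_eq_sum hG, Finset.sum_range_succ, Finset.sum_range_succ, hlow]
  simp only [zero_add, Polynomial.eval_add, Polynomial.eval_monomial, Nat.add_sub_cancel_left,
    Nat.sub_self, pow_one, pow_zero]
  ring

end Slice

theorem coeff_mul_of_X_pow_dvd {R : Type*} [Semiring R] {p : Polynomial R} {m : ℕ}
    (hp : Polynomial.X ^ m ∣ p) (q : Polynomial R) : (p * q).coeff m = p.coeff m * q.coeff 0 := by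
  obtain ⟨r, rfl⟩ := hp
  simp [mul_assoc, Polynomial.coeff_X_pow_mul']

theorem X_pow_add_X_pow_ne_add_pow {R : Type*} [CommSemiring R] [CharZero R] {k : ℕ} (hk : k ≠ 1) :
    (X 0 ^ k + X 1 ^ k : MvPolynomial (Fin 2) R) ≠ (X 0 + X 1) ^ k := by
  intro h
  have h₂ : (2 : R) ^ 1 = 2 ^ k := by
    simpa [one_add_one_eq_two] using congrArg (eval (1 : Fin 2 → R)) h
  exact hk (Nat.pow_right_injective le_rfl (by exact_mod_cast h₂)).symm

section CyclicIdentity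

variable {R : Type*} [CommRing R] [IsDomain R] {G : MvPolynomial (Fin 2) R} {n m : ℕ}
  (hG : G.IsHomogeneous n)
  (hanti : ∀ x y : R, eval ![y, x] G = -eval ![x, y] G)
  (hcyc : ∀ x y z : R, eval ![x, y] G * eval ![x + y, z] G
    + eval ![y, z] G * eval ![y + z, x] G + eval ![z, x] G * eval ![x + z, y] G = 0)
include hanti hcyc

theorem slice_mul_comp_eq [Infinite R] (y z : R) :
    slice G y * (slice G z).comp (Polynomial.X + Polynomial.C y) =
      slice G z * (slice G y).comp (Polynomial.X + Polynomial.C z)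
        + slice G (y + z) * Polynomial.C (eval ![y, z] G) := by
  refine Polynomial.funext fun x ↦ ?_
  simp only [Polynomial.eval_mul, Polynomial.eval_add, Polynomial.eval_comp, Polynomial.eval_X,
    Polynomial.eval_C, eval_slice]
  linear_combination hcyc x y z - eval ![y, z] G * hanti x (y + z)
    - eval ![x + z, y] G * hanti x z

include hG

theorem coeff_mul_eval_mul_eq_zero [Infinite R] (hm : m ≤ n)
    (hdvd : Polynomial.X ^ m ∣ slice G 1) (y z : R) :
    (slice G 1).coeff m *
      (eval ![y, z] G * (y ^ (n - m) + z ^ (n - m) - (y + z) ^ (n - m))) = 0 := by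
  have h := congrArg (Polynomial.coeff · m) (slice_mul_comp_eq hanti hcyc y z)
  simp only [Polynomial.coeff_add, coeff_mul_of_X_pow_dvd (X_pow_dvd_slice hG hm hdvd _),
    coeff_slice hG hm y, coeff_slice hG hm z, coeff_slice hG hm (y + z),
    Polynomial.coeff_zero_eq_eval_zero, Polynomial.eval_comp, Polynomial.eval_add,
    Polynomial.eval_X, Polynomial.eval_C, zero_add, eval_slice] at h
  linear_combination h + (slice G 1).coeff m * z ^ (n - m) * hanti y z

theorem coeff_slice_one_eq_zero [CharZero R] (hG₀ : G ≠ 0) (hm : m + 1 < n)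
    (hdvd : Polynomial.X ^ m ∣ slice G 1) : (slice G 1).coeff m = 0 := by
  by_contra ha
  have hprod : G * (X 0 ^ (n - m) + X 1 ^ (n - m) - (X 0 + X 1) ^ (n - m)) = 0 :=
    eq_zero_of_forall_eval_pair_eq_zero fun y z ↦ by
      simpa [ha] using coeff_mul_eval_mul_eq_zero hG hanti hcyc (by lia) hdvd y z
  exact X_pow_add_X_pow_ne_add_pow (by lia)
    (sub_eq_zero.mp ((mul_eq_zero.mp hprod).resolve_left hG₀))

theorem X_pow_dvd_slice_one [CharZero R] (hG₀ : G ≠ 0) (hm : m < n) :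
    Polynomial.X ^ m ∣ slice G 1 := by
  induction m with
  | zero => simp
  | succ m ih =>
    have hdvd := ih (by lia)
    rw [Polynomial.X_pow_dvd_iff, Nat.forall_lt_succ_right]
    exact ⟨Polynomial.X_pow_dvd_iff.mp hdvd, coeff_slice_one_eq_zero hG hanti hcyc hG₀ hm hdvd⟩

theorem eq_zero_of_antisymm_of_cyclic [CharZero R] (hn : 2 ≤ n) : G = 0 := by
  by_contra hG₀
  obtain ⟨m, rfl⟩ := Nat.exists_eq_add_of_le' (show 1 ≤ n by lia)
  have hm : m ≠ 0 := by lia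
  have hdvd : Polynomial.X ^ m ∣ slice G 1 :=
    X_pow_dvd_slice_one hG hanti hcyc hG₀ (Nat.lt_succ_self m)
  have heval := eval_eq_of_X_pow_dvd_slice hG hdvd
  have hb : (slice G 1).coeff (m + 1) = 0 := by
    simpa [heval, hm] using hanti 0 1
  have ha : (slice G 1).coeff m = 0 := by
    simpa [heval, hb, self_eq_neg] using hanti 1 1
  exact hG₀ (eq_zero_of_forall_eval_pair_eq_zero fun x y ↦ by simp [heval, ha, hb])

end CyclicIdentity

theorem eval_neg_swap_of_isHomogeneous {R : Type*} [CommRing R] {F : MvPolynomial (Fin 2) R}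
    {n : ℕ} (hF : F.IsHomogeneous n)
    (hswap : rename (Equiv.swap (0 : Fin 2) 1) F = (-1 : MvPolynomial (Fin 2) R) ^ (n + 1) * F)
    (x y : R) : eval ![y, -x] F = -eval ![x, -y] F := by
  calc eval ![y, -x] F = (-1) ^ (n + 1) * eval ![-x, y] F := by
        rw [← eval_rename_swap, hswap]
        simp
    _ = (-1) ^ (n + 1) * ((-1) ^ n * eval ![x, -y] F) := by
        rw [← eval_smul_of_isHomogeneous hF]
        simp
    _ = -eval ![x, -y] F := by
        rw [← mul_assoc, ← pow_add, Odd.neg_one_pow ⟨n, by ring⟩, neg_one_mul]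

theorem stmt_11_general {R : Type*} [CommRing R] [IsDomain R] [CharZero R] (Δ : ℕ) (hΔ : 3 ≤ Δ)
    (F : MvPolynomial (Fin 2) R) (hhom : F.IsHomogeneous (Δ - 1))
    (h1 : rename (Equiv.swap (0 : Fin 2) 1) F = (-1 : MvPolynomial (Fin 2) R) ^ Δ * F)
    (h4 : ∀ x y z : R,
      eval ![x, -y] F * eval ![x + y, -z] F
        + eval ![y, -z] F * eval ![y + z, -x] F
        + eval ![z, -x] F * eval ![x + z, -y] F = 0) :
    F = 0 := by
  obtain ⟨n, rfl⟩ := Nat.exists_eq_add_of_le' (show 1 ≤ Δ by lia)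
  let G : MvPolynomial (Fin 2) R := aeval ![X 0, -X 1] F
  have heval (x y : R) : eval ![x, y] G = eval ![x, -y] F := eval_aeval_X_neg_X F x y
  have hGhom : G.IsHomogeneous n := by
    simpa using hhom.aeval ![X 0, -X 1] (n := 1)
      (by simp [Fin.forall_fin_two, isHomogeneous_X, IsHomogeneous.neg])
  have hG₀ : G = 0 := eq_zero_of_antisymm_of_cyclic hGhom
    (by simpa only [heval] using eval_neg_swap_of_isHomogeneous hhom h1)
    (by simpa only [heval] using h4) (by lia)
  exact eq_zero_of_forall_eval_pair_eq_zero fun x y ↦ by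
    simpa [hG₀] using (heval x (-y)).symm

/-- Let `Δ ≥ 3` be an integer and `F ∈ ℂ[x,y]` homogeneous of degree `Δ−1` with
(1) `F(y,x) = (−1)^Δ F(x,y)` as polynomials, (2) `F(0,x) = 0` for all `x`,
(3) `F(−x,x) = 0` for all `x`, and (4)
`F(x,−y)F(x+y,−z) + F(y,−z)F(y+z,−x) + F(z,−x)F(x+z,−y) = 0` for all `x,y,z`.
Then `F = 0`. -/
theorem stmt_11 (Δ : ℕ) (hΔ : 3 ≤ Δ) (F : MvPolynomial (Fin 2) ℂ)
    (hhom : F.IsHomogeneous (Δ - 1))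
    (h1 : rename (Equiv.swap (0 : Fin 2) 1) F = (-1 : MvPolynomial (Fin 2) ℂ) ^ Δ * F)
    (h2 : ∀ x : ℂ, eval ![0, x] F = 0)
    (h3 : ∀ x : ℂ, eval ![-x, x] F = 0)
    (h4 : ∀ x y z : ℂ,
      eval ![x, -y] F * eval ![x + y, -z] F
        + eval ![y, -z] F * eval ![y + z, -x] F
        + eval ![z, -x] F * eval ![x + z, -y] F = 0) :
    F = 0 :=
  stmt_11_general Δ hΔ F hhom h1 h4
end

section
/- For every even integer Δ with Δ > 6, the polynomial f(x) = (x+1)^{Δ−1} − x^{Δ−1} − 1 does not divide the polynomial H(x) = (Δ−3)·x^{2Δ−2}·(x+1) − x^{2Δ−3} + x³ − (Δ−3)·x·(x+1) in ℚ[x]. -/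
open Polynomial

/-!
Put `n = Δ - 1`, `w = x(x + 1)`, and replace the coefficient `Δ - 3` of `H` by an arbitrary
constant `c`. If `f` divides `H`, then modulo `f` we have `a (xⁿ)² = A` with `a = c w - 1` and
`A = c x²(x + 1) - x⁴`. As `n` is odd, `f` is invariant under `x ↦ -1 - x`, so also
`a ((x + 1)ⁿ)² = B`, where `B` is the reflection of `A`. Hence, up to the common factor `a`, the
elements `a`, `A`, `B` are the squares of `1`, `xⁿ`, `(x + 1)ⁿ`, which are linearly related modulo
`f`. Heron's form therefore vanishes at `(a, A, B)` modulo `f`; as a polynomial in `x` its value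
collapses to `4 (c + 1) (c + 4) w² (w + 1)`. Since `0` and `-1` are at most simple roots of `f`, one
factor `w` can be dropped, and `f`, of degree at least `n - 1`, divides a polynomial of degree `4`.
-/

section HeronForm

variable {R : Type*} [CommRing R]

/-- Heron's quadratic form: at the squared side lengths of a triangle it equals `-16` times the
squared area, so it detects linear relations among square roots of its arguments. -/
def heronForm (a b c : R) : R :=
  a ^ 2 + b ^ 2 + c ^ 2 - 2 * (a * b + b * c + c * a)

theorem heronForm_mul_sq (e x y z : R) :
    heronForm (e * x ^ 2) (e * y ^ 2) (e * z ^ 2) =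
      e ^ 2 * ((x + y + z) * (x + y - z) * (x - y + z) * (x - y - z)) := by
  unfold heronForm
  ring

theorem dvd_heronForm_of_dvd_sub {d e x y z a b c : R} (hxyz : d ∣ x + y - z)
    (ha : d ∣ e * x ^ 2 - a) (hb : d ∣ e * y ^ 2 - b) (hc : d ∣ e * z ^ 2 - c) :
    d ∣ heronForm a b c := by
  have hsq : d ∣ heronForm (e * x ^ 2) (e * y ^ 2) (e * z ^ 2) := by
    rw [heronForm_mul_sq]
    exact (((hxyz.mul_left _).mul_right _).mul_right _).mul_left _
  simp only [← Ideal.Quotient.eq_zero_iff_dvd, heronForm, map_sub, map_add, map_mul, map_pow,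
    sub_eq_zero] at ha hb hc hsq ⊢
  simpa only [ha, hb, hc] using hsq

theorem heronForm_reflected_pair (c x : R) :
    heronForm (c * (x * (x + 1)) - 1) (c * x ^ 2 * (x + 1) - x ^ 4)
        (-(c * x * (x + 1) ^ 2) - (x + 1) ^ 4) =
      4 * (c + 1) * (c + 4) * (x ^ 2 * ((x + 1) ^ 2 * (x ^ 2 + x + 1))) := by
  unfold heronForm
  ring

end HeronForm

theorem dvd_prime_mul_of_dvd_prime_sq_mul {M : Type*} [CommMonoidWithZero M] [IsCancelMulZero M]
    {p a b : M} (hp : Prime p) (ha : ¬ p ^ 2 ∣ a) (h : a ∣ p ^ 2 * b) : a ∣ p * b := by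
  obtain ⟨k, hk⟩ := h
  have hpk : p ∣ k := by
    by_contra hpk
    exact ha (hp.pow_dvd_of_dvd_mul_right 2 hpk ⟨b, hk.symm⟩)
  obtain ⟨l, rfl⟩ := hpk
  refine ⟨l, mul_left_cancel₀ hp.ne_zero ?_⟩
  rw [← mul_assoc, ← sq, hk, mul_left_comm]

section CauchyPoly

variable {R : Type*} [CommRing R] {n : ℕ}

variable (R n) in
/-- The Cauchy polynomial `(x + 1)ⁿ - xⁿ - 1`, the polynomial `f` of the theorem for
`n = Δ - 1`. -/
noncomputable def cauchyPoly : R[X] :=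
  (X + 1) ^ n - X ^ n - 1

theorem coeff_cauchyPoly {k : ℕ} (hk : k ≠ 0) (hkn : k ≠ n) :
    (cauchyPoly R n).coeff k = n.choose k := by
  simp [cauchyPoly, coeff_X_add_one_pow, coeff_X_pow, coeff_one, hk, hkn]

theorem sub_one_le_natDegree_cauchyPoly (hn : (n : R) ≠ 0) :
    n - 1 ≤ (cauchyPoly R n).natDegree := by
  rcases Nat.lt_or_ge 1 n with h | h
  · apply le_natDegree_of_ne_zero
    rwa [coeff_cauchyPoly (by omega) (by omega), Nat.choose_symm (by omega), Nat.choose_one_right]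
  · omega

theorem cauchyPoly_comp_neg_one_sub_X (hn : Odd n) :
    (cauchyPoly R n).comp (-1 - X) = cauchyPoly R n := by
  have hX : (-1 - X : R[X]) = -(X + 1) := by ring
  have hX1 : (-1 - X + 1 : R[X]) = -X := by ring
  simp only [cauchyPoly, sub_comp, pow_comp, add_comp, X_comp, one_comp, hX1]
  rw [hX, hn.neg_pow, hn.neg_pow]
  ring

theorem cauchyPoly_dvd_comp_neg_one_sub_X (hn : Odd n) {p : R[X]} (h : cauchyPoly R n ∣ p) :
    cauchyPoly R n ∣ p.comp (-1 - X) := by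
  have hreflect := map_dvd (compRingHom (-1 - X)) h
  rwa [coe_compRingHom_apply, coe_compRingHom_apply, cauchyPoly_comp_neg_one_sub_X hn] at hreflect

theorem not_X_sq_dvd_cauchyPoly (hn : (n : R) ≠ 0) (hn1 : n ≠ 1) :
    ¬ X ^ 2 ∣ cauchyPoly R n := by
  intro h
  have hcoeff := X_pow_dvd_iff.mp h 1 one_lt_two
  rw [coeff_cauchyPoly one_ne_zero hn1.symm, Nat.choose_one_right] at hcoeff
  exact hn hcoeff

theorem not_X_add_one_sq_dvd_cauchyPoly (hodd : Odd n) (hn : (n : R) ≠ 0) (hn1 : n ≠ 1) :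
    ¬ (X + 1) ^ 2 ∣ cauchyPoly R n := by
  intro h
  apply not_X_sq_dvd_cauchyPoly hn hn1
  have hreflect := map_dvd (compRingHom (-1 - X)) h
  have hX : ((X + 1 : R[X]) ^ 2).comp (-1 - X) = X ^ 2 := by
    simp only [pow_comp, add_comp, X_comp, one_comp]
    ring
  rwa [coe_compRingHom_apply, coe_compRingHom_apply, hX,
    cauchyPoly_comp_neg_one_sub_X hodd] at hreflect

theorem cauchyPoly_dvd_of_dvd (hodd : Odd n) (c : R)
    (h : cauchyPoly R n ∣
      C c * X ^ (2 * n) * (X + 1) - X ^ (2 * n - 1) + X ^ 3 - C c * X * (X + 1)) :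
    cauchyPoly R n ∣
      C (4 * (c + 1) * (c + 4)) * (X ^ 2 * ((X + 1) ^ 2 * (X ^ 2 + X + 1))) := by
  have hX : cauchyPoly R n ∣
      (C c * (X * (X + 1)) - 1) * (X ^ n) ^ 2 - (C c * X ^ 2 * (X + 1) - X ^ 4) := by
    have hpow : (X : R[X]) ^ (2 * n - 1) * X = X ^ (2 * n) :=
      pow_sub_one_mul (by have := hodd.pos; omega) X
    convert h.mul_left X using 1
    linear_combination hpow
  have hX1 : cauchyPoly R n ∣
      (C c * (X * (X + 1)) - 1) * ((X + 1) ^ n) ^ 2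
        - (-(C c * X * (X + 1) ^ 2) - (X + 1) ^ 4) := by
    have hsq : ((-1 - X : R[X]) ^ n) ^ 2 = ((X + 1) ^ n) ^ 2 := by
      rw [show (-1 - X : R[X]) = -(X + 1) by ring, hodd.neg_pow, neg_sq]
    convert cauchyPoly_dvd_comp_neg_one_sub_X hodd hX using 1
    simp only [sub_comp, mul_comp, add_comp, pow_comp, X_comp, C_comp, one_comp, hsq]
    ring
  have hlinear : cauchyPoly R n ∣ 1 + X ^ n - (X + 1) ^ n :=
    ⟨-1, by unfold cauchyPoly; ring⟩
  have hheron := dvd_heronForm_of_dvd_sub (a := C c * (X * (X + 1)) - 1) hlinear (by simp) hX hX1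
  simpa only [heronForm_reflected_pair, C_mul, C_add, C_1, C_ofNat] using hheron

variable [IsDomain R]

theorem cauchyPoly_dvd_of_dvd_sq_mul_sq (hodd : Odd n) (hn : (n : R) ≠ 0) (hn1 : n ≠ 1) {p : R[X]}
    (h : cauchyPoly R n ∣ X ^ 2 * ((X + 1) ^ 2 * p)) :
    cauchyPoly R n ∣ X * ((X + 1) * p) := by
  have hprime : Prime (X + 1 : R[X]) := by simpa using prime_X_sub_C (-1 : R)
  have hX := dvd_prime_mul_of_dvd_prime_sq_mul prime_X (not_X_sq_dvd_cauchyPoly hn hn1) h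
  rw [mul_left_comm] at hX ⊢
  exact dvd_prime_mul_of_dvd_prime_sq_mul hprime (not_X_add_one_sq_dvd_cauchyPoly hodd hn hn1) hX

theorem le_five_of_cauchyPoly_dvd (hn : (n : R) ≠ 0) {b : R} (hb : b ≠ 0)
    (h : cauchyPoly R n ∣ X * ((X + 1) * (C b * (X ^ 2 + X + 1)))) : n ≤ 5 := by
  set q : R[X] := X * ((X + 1) * (C b * (X ^ 2 + X + 1))) with hq
  have hq0 : q ≠ 0 := by
    have hcoeff : q.coeff 4 = b := by
      rw [hq]
      compute_degree!
    intro h0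
    exact hb (by rw [← hcoeff, h0, coeff_zero])
  have hdeg : q.natDegree ≤ 4 := by
    rw [hq]
    compute_degree
  have := sub_one_le_natDegree_cauchyPoly hn
  have := natDegree_le_of_dvd h hq0
  omega

end CauchyPoly

theorem stmt_12_general {R : Type*} [CommRing R] [IsDomain R] {Δ : ℕ} (hΔeven : Even Δ)
    (hΔ : 6 < Δ) (hΔR : ((Δ - 1 : ℕ) : R) ≠ 0) {c : R} (hc : 4 * (c + 1) * (c + 4) ≠ 0) :
    ¬ (((X + 1) ^ (Δ - 1) - X ^ (Δ - 1) - 1 : R[X]) ∣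
        (C c * X ^ (2 * Δ - 2) * (X + 1) - X ^ (2 * Δ - 3) + X ^ 3 - C c * X * (X + 1))) := by
  intro h
  have hodd : Odd (Δ - 1) := Nat.Even.sub_odd (by omega) hΔeven odd_one
  rw [show 2 * Δ - 2 = 2 * (Δ - 1) by omega, show 2 * Δ - 3 = 2 * (Δ - 1) - 1 by omega] at h
  have hheron := cauchyPoly_dvd_of_dvd hodd c h
  rw [mul_left_comm, mul_left_comm (C _)] at hheron
  have hsimple := cauchyPoly_dvd_of_dvd_sq_mul_sq hodd hΔR (by omega) hheron
  have := le_five_of_cauchyPoly_dvd hΔR hc hsimple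
  omega

/-- For every even integer `Δ > 6`, the polynomial `f(x) = (x+1)^{Δ−1} − x^{Δ−1} − 1`
does not divide `H(x) = (Δ−3)x^{2Δ−2}(x+1) − x^{2Δ−3} + x³ − (Δ−3)x(x+1)` in `ℚ[x]`. -/
theorem stmt_12 (Δ : ℕ) (hΔeven : Even Δ) (hΔ : 6 < Δ) :
    ¬ (((X + 1) ^ (Δ - 1) - X ^ (Δ - 1) - 1 : Polynomial ℚ) ∣
        (C ((Δ : ℚ) - 3) * X ^ (2 * Δ - 2) * (X + 1) - X ^ (2 * Δ - 3) + X ^ 3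
          - C ((Δ : ℚ) - 3) * X * (X + 1))) := by
  have hΔ' : (6 : ℚ) < Δ := by exact_mod_cast hΔ
  refine stmt_12_general hΔeven hΔ (Nat.cast_ne_zero.mpr (by omega)) ?_
  exact (mul_pos (by linarith) (by linarith)).ne'
end
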